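/- arXiv:1410.3333 — 2 statements merged into one kernel-verified Lean document; each statement's English description precedes it below -/
import Mathlib

section
/- Suppose f satisfies the local condition. Then there exists a constant c_f > 0 such that (log x)·∏_{p ≤ x, p prime} (1 − ν₁(p)/(p − 1)) → c_f as x → ∞. -/
open Polynomial Filter

/-- ν₁(d) = #{a mod d : gcd(a,d) = 1 and f(a) ≡ 0 (mod d)} -/
def nu1 (f : Polynomial ℤ) (d : ℕ) : ℕ :=
  ((Finset.range d).filter (fun a : ℕ => Nat.gcd a d = 1 ∧ (d : ℤ) ∣ f.eval (a : ℤ))).card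

open Topology NumberField

/-!
For a root `θ` of `f` and `K = ℚ(θ)`, Dedekind–Kummer identifies `ν₁(p)`, for all but finitely many
primes `p`, with the number of primes of `K` of norm `p`. The Dedekind zeta function of `K` has a
simple pole at `1`, so by its Euler product `∑ N(P)⁻ˢ + log (s - 1)`, summed over all primes `P` of
`K`, converges as `s → 1⁺`. A Tauberian argument in the style of Karamata (approximating a cutoff
function by polynomials in `exp (-δ log N(P))`) turns this into the convergence of
`∑_{N(P) ≤ x} N(P)⁻¹ - log log x`. The primes of residue degree at least two contribute a convergent
sum, hence `∑_{p ≤ x} ν₁(p)/p - log log x` converges. Since `ν₁(p) ≤ deg f`, replacing `ν₁(p)/p` by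
`-log (1 - ν₁(p)/(p - 1))` costs a sum of terms `O(p⁻²)`; the local condition makes the logarithms
finite, and exponentiating gives the product.
-/

section Tauberian

theorem exists_tendsto_of_forall_eventually_dist_le {α E : Type*} [PseudoMetricSpace E]
    [CompleteSpace E] {l : Filter α} [l.NeBot] {f : α → E}
    (h : ∀ ε > 0, ∃ c, ∀ᶠ a in l, dist (f a) c ≤ ε) : ∃ c, Tendsto f l (𝓝 c) := by
  refine cauchy_map_iff_exists_tendsto.1 (Metric.cauchy_iff.2 ⟨inferInstance, fun ε hε => ?_⟩)
  obtain ⟨c, hc⟩ := h (ε / 4) (by positivity)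
  refine ⟨Metric.closedBall c (ε / 4), mem_map.2 hc, fun x hx y hy => ?_⟩
  calc dist x y ≤ dist x c + dist y c := dist_triangle_right x y c
    _ ≤ ε / 4 + ε / 4 := add_le_add hx hy
    _ < ε := by linarith

variable {ι : Type*}

/-- The integral of `g (exp (-δ t))` against the atomic measure with mass `b i` at `l i`. For
`g = id` this is the Laplace transform of the measure at `δ`, and for `g` the indicator function
of `[exp (-1), 1]` it is the total mass of `[0, δ⁻¹]`. -/
noncomputable def laplaceSum (b l : ι → ℝ) (g : ℝ → ℝ) (δ : ℝ) : ℝ :=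
  ∑' i, b i * g (Real.exp (-(δ * l i)))

theorem tendsto_const_mul_nhdsGT_zero {k : ℝ} (hk : 0 < k) :
    Tendsto (k * ·) (𝓝[>] 0) (𝓝[>] 0) :=
  tendsto_iff_comap.2 (comap_mulLeft_nhdsGT_zero hk).ge

variable {b l : ι → ℝ}

theorem exp_neg_mul_mem_Icc (hl : ∀ i, 0 ≤ l i) {δ : ℝ} (hδ : 0 ≤ δ) (i : ι) :
    Real.exp (-(δ * l i)) ∈ Set.Icc (0 : ℝ) 1 :=
  ⟨(Real.exp_pos _).le, Real.exp_le_one_iff.2 (neg_nonpos.2 (mul_nonneg hδ (hl i)))⟩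

theorem summable_mul_comp_exp (hb : ∀ i, 0 ≤ b i) (hl : ∀ i, 0 ≤ l i) {δ : ℝ} (hδ : 0 ≤ δ)
    (hs : Summable fun i => b i * Real.exp (-(δ * l i))) {g : ℝ → ℝ} {M : ℝ}
    (hg : ∀ x ∈ Set.Icc (0 : ℝ) 1, |g x| ≤ M * x) :
    Summable fun i => b i * g (Real.exp (-(δ * l i))) := by
  refine Summable.of_norm_bounded (hs.mul_left M) fun i => ?_
  calc ‖b i * g (Real.exp (-(δ * l i)))‖ = b i * |g (Real.exp (-(δ * l i)))| := by
        rw [Real.norm_eq_abs, abs_mul, abs_of_nonneg (hb i)]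
    _ ≤ b i * (M * Real.exp (-(δ * l i))) :=
        mul_le_mul_of_nonneg_left (hg _ (exp_neg_mul_mem_Icc hl hδ i)) (hb i)
    _ = M * (b i * Real.exp (-(δ * l i))) := mul_left_comm ..

theorem exists_abs_mul_one_sub_mul_le {r : ℝ → ℝ} (hr : ContinuousOn r (Set.Icc 0 1)) :
    ∃ M, ∀ x ∈ Set.Icc (0 : ℝ) 1, |x * (1 - x) * r x| ≤ M * x := by
  obtain ⟨M, hM⟩ := isCompact_Icc.exists_bound_of_continuousOn hr
  refine ⟨M, fun x hx => ?_⟩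
  rw [abs_mul, abs_of_nonneg (mul_nonneg hx.1 (sub_nonneg.2 hx.2)), mul_comm M]
  exact mul_le_mul (mul_le_of_le_one_right hx.1 (sub_le_self _ hx.1)) (hM x hx) (abs_nonneg _)
    hx.1

theorem summable_mul_one_sub_mul_comp_exp (hb : ∀ i, 0 ≤ b i) (hl : ∀ i, 0 ≤ l i) {δ : ℝ}
    (hδ : 0 ≤ δ) (hs : Summable fun i => b i * Real.exp (-(δ * l i))) {r : ℝ → ℝ}
    (hr : ContinuousOn r (Set.Icc 0 1)) :
    Summable fun i => b i * (Real.exp (-(δ * l i)) * (1 - Real.exp (-(δ * l i))) *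
      r (Real.exp (-(δ * l i)))) := by
  obtain ⟨M, hM⟩ := exists_abs_mul_one_sub_mul_le hr
  exact summable_mul_comp_exp (g := fun x => x * (1 - x) * r x) hb hl hδ hs hM

theorem laplaceSum_pow (b l : ι → ℝ) (k : ℕ) (δ : ℝ) :
    laplaceSum b l (· ^ k) δ = laplaceSum b l id (k * δ) := by
  refine tsum_congr fun i => ?_
  dsimp only [id]
  rw [← Real.exp_nat_mul]
  ring_nf

theorem tendsto_laplaceSum_pow_add_log {C : ℝ}
    (hF : Tendsto (fun δ => laplaceSum b l id δ + Real.log δ) (𝓝[>] 0) (𝓝 C)) {k : ℕ}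
    (hk : k ≠ 0) :
    Tendsto (fun δ => laplaceSum b l (· ^ k) δ + Real.log δ) (𝓝[>] 0) (𝓝 (C - Real.log k)) := by
  have hk0 : (0 : ℝ) < k := by positivity
  refine ((hF.comp (tendsto_const_mul_nhdsGT_zero hk0)).sub_const (Real.log k)).congr' ?_
  filter_upwards [self_mem_nhdsWithin] with δ (hδ : 0 < δ)
  rw [Function.comp_apply, laplaceSum_pow, Real.log_mul hk0.ne' hδ.ne']
  ring

theorem exists_tendsto_laplaceSum_polynomial (hb : ∀ i, 0 ≤ b i) (hl : ∀ i, 0 ≤ l i)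
    (hs : ∀ δ > 0, Summable fun i => b i * Real.exp (-(δ * l i))) {C : ℝ}
    (hF : Tendsto (fun δ => laplaceSum b l id δ + Real.log δ) (𝓝[>] 0) (𝓝 C)) (R : ℝ[X]) :
    ∃ c, Tendsto (laplaceSum b l fun x => x * (1 - x) * R.eval x) (𝓝[>] 0) (𝓝 c) := by
  induction R using Polynomial.induction_on' with
  | add p q hp hq =>
    obtain ⟨c, hc⟩ := hp
    obtain ⟨d, hd⟩ := hq
    refine ⟨c + d, (hc.add hd).congr' ?_⟩
    filter_upwards [self_mem_nhdsWithin] with δ (hδ : 0 < δ)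
    have hsum (p : ℝ[X]) :=
      summable_mul_one_sub_mul_comp_exp hb hl hδ.le (hs δ hδ) p.continuous.continuousOn
    rw [laplaceSum, laplaceSum, ← (hsum p).tsum_add (hsum q)]
    refine tsum_congr fun i => ?_
    simp only [eval_add]
    ring
  | monomial n a =>
    refine ⟨_, (((tendsto_laplaceSum_pow_add_log hF n.succ_ne_zero).sub
      (tendsto_laplaceSum_pow_add_log hF (n + 1).succ_ne_zero)).const_mul a).congr' ?_⟩
    filter_upwards [self_mem_nhdsWithin] with δ (hδ : 0 < δ)
    have hsum (k : ℕ) : Summable fun i => b i * Real.exp (-(δ * l i)) ^ (k + 1) :=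
      summable_mul_comp_exp (g := (· ^ (k + 1))) (M := 1) hb hl hδ.le (hs δ hδ) fun x hx => by
        rw [abs_of_nonneg (pow_nonneg hx.1 _), one_mul]
        exact pow_le_of_le_one hx.1 hx.2 k.succ_ne_zero
    rw [add_sub_add_right_eq_sub, laplaceSum, laplaceSum, ← (hsum n).tsum_sub (hsum (n + 1)),
      ← tsum_mul_left]
    refine tsum_congr fun i => ?_
    simp only [eval_monomial]
    ring

theorem abs_laplaceSum_mul_one_sub_mul_sub_le (hb : ∀ i, 0 ≤ b i) (hl : ∀ i, 0 ≤ l i) {δ : ℝ}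
    (hδ : 0 ≤ δ) (hs : Summable fun i => b i * Real.exp (-(δ * l i))) {r₁ r₂ : ℝ → ℝ} {η : ℝ}
    (h₁ : ContinuousOn r₁ (Set.Icc 0 1)) (h₂ : ContinuousOn r₂ (Set.Icc 0 1))
    (hr : ∀ x ∈ Set.Icc (0 : ℝ) 1, |r₁ x - r₂ x| ≤ η) :
    |laplaceSum b l (fun x => x * (1 - x) * r₁ x) δ -
      laplaceSum b l (fun x => x * (1 - x) * r₂ x) δ| ≤
      η * laplaceSum b l (fun x => x * (1 - x) * 1) δ := by
  have hsum (r : ℝ → ℝ) (hr : ContinuousOn r (Set.Icc 0 1)) :=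
    summable_mul_one_sub_mul_comp_exp hb hl hδ hs hr
  rw [laplaceSum, laplaceSum, laplaceSum, ← (hsum _ h₁).tsum_sub (hsum _ h₂), ← tsum_mul_left,
    ← Real.norm_eq_abs]
  refine tsum_of_norm_bounded ((hsum _ continuousOn_const).mul_left η).hasSum fun i => ?_
  have hx := exp_neg_mul_mem_Icc hl hδ i
  set x := Real.exp (-(δ * l i))
  have hbx : 0 ≤ b i * (x * (1 - x)) := mul_nonneg (hb i) (mul_nonneg hx.1 (sub_nonneg.2 hx.2))
  calc ‖b i * (x * (1 - x) * r₁ x) - b i * (x * (1 - x) * r₂ x)‖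
      = b i * (x * (1 - x)) * |r₁ x - r₂ x| := by
        rw [← mul_sub, ← mul_sub, ← mul_assoc, Real.norm_eq_abs, abs_mul, abs_of_nonneg hbx]
    _ ≤ b i * (x * (1 - x)) * η := mul_le_mul_of_nonneg_left (hr x hx) hbx
    _ = η * (b i * (x * (1 - x) * 1)) := by ring

theorem exists_tendsto_laplaceSum_continuousOn (hb : ∀ i, 0 ≤ b i) (hl : ∀ i, 0 ≤ l i)
    (hs : ∀ δ > 0, Summable fun i => b i * Real.exp (-(δ * l i))) {C : ℝ}
    (hF : Tendsto (fun δ => laplaceSum b l id δ + Real.log δ) (𝓝[>] 0) (𝓝 C)) {r : ℝ → ℝ}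
    (hr : ContinuousOn r (Set.Icc 0 1)) :
    ∃ c, Tendsto (laplaceSum b l fun x => x * (1 - x) * r x) (𝓝[>] 0) (𝓝 c) := by
  refine exists_tendsto_of_forall_eventually_dist_le fun ε hε => ?_
  obtain ⟨m, hm⟩ := exists_tendsto_laplaceSum_polynomial hb hl hs hF 1
  simp only [eval_one] at hm
  set K := |m| + 1
  have hmK : m < K := (le_abs_self m).trans_lt (lt_add_one _)
  have hK : 0 < K := by positivity
  obtain ⟨R, hR⟩ := exists_polynomial_near_of_continuousOn 0 1 r hr (ε / 2 / K) (by positivity)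
  obtain ⟨c, hc⟩ := exists_tendsto_laplaceSum_polynomial hb hl hs hF R
  refine ⟨c, ?_⟩
  filter_upwards [self_mem_nhdsWithin, hm.eventually_lt_const hmK,
    hc.eventually (Metric.closedBall_mem_nhds c (half_pos hε))] with δ (hδ : 0 < δ) hmass hpoly
  have happrox : |laplaceSum b l (fun x => x * (1 - x) * r x) δ -
      laplaceSum b l (fun x => x * (1 - x) * R.eval x) δ| ≤ ε / 2 :=
    calc _ ≤ ε / 2 / K * laplaceSum b l (fun x => x * (1 - x) * 1) δ :=
          abs_laplaceSum_mul_one_sub_mul_sub_le hb hl hδ.le (hs δ hδ) hr R.continuous.continuousOn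
            fun x hx => (abs_sub_comm _ _).trans_le (hR x hx).le
      _ ≤ ε / 2 / K * K := mul_le_mul_of_nonneg_left hmass.le (by positivity)
      _ = ε / 2 := div_mul_cancel₀ _ hK.ne'
  calc _ ≤ _ := dist_triangle _ (laplaceSum b l (fun x => x * (1 - x) * R.eval x) δ) _
    _ ≤ ε / 2 + ε / 2 := add_le_add happrox hpoly
    _ = ε := add_halves ε

-- `φ - x = φ (1 - x) - (1 - φ) x`, and the two terms vanish near `0` and near `1` respectively.
theorem exists_continuousOn_eq_add_mul_one_sub_mul {φ : ℝ → ℝ} (hφ : Continuous φ) {A B : ℝ}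
    (hA : 0 < A) (hB : B < 1) (h0 : ∀ x ≤ A, φ x = 0) (h1 : ∀ x ≥ B, φ x = 1) :
    ∃ r : ℝ → ℝ, ContinuousOn r (Set.Icc 0 1) ∧ ∀ x, φ x = x + x * (1 - x) * r x := by
  refine ⟨fun x => φ x / max x A - (1 - φ x) / max (1 - x) (1 - B), ?_, fun x => ?_⟩
  · refine Continuous.continuousOn (.sub (hφ.div (by fun_prop) fun x => ?_)
      (.div (by fun_prop) (by fun_prop) fun x => ?_))
    · exact (lt_max_of_lt_right hA).ne'
    · exact (lt_max_of_lt_right (sub_pos.2 hB)).ne'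
  · have hleft : x * (φ x / max x A) = φ x := by
      rcases le_or_gt x A with hx | hx
      · simp [h0 x hx]
      · rw [max_eq_left hx.le, mul_div_cancel₀ _ (hA.trans hx).ne']
    have hright : (1 - x) * ((1 - φ x) / max (1 - x) (1 - B)) = 1 - φ x := by
      rcases le_or_gt B x with hx | hx
      · simp [h1 x hx]
      · rw [max_eq_left (by linarith), mul_div_cancel₀ _ (by linarith)]
    linear_combination (x - 1) * hleft + x * hright

theorem exists_cutoff {A B : ℝ} (hA : 0 < A) (hAB : A < B) (hB : B < 1) :
    ∃ φ r : ℝ → ℝ, ContinuousOn r (Set.Icc 0 1) ∧ (∀ x, φ x = x + x * (1 - x) * r x) ∧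
      (∀ x, φ x ∈ Set.Icc 0 1) ∧ (∀ x ≤ A, φ x = 0) ∧ ∀ x ≥ B, φ x = 1 := by
  let φ : ℝ → ℝ := fun x => Real.smoothTransition ((x - A) / (B - A))
  have hφ : Continuous φ := Real.smoothTransition.continuous.comp (by fun_prop)
  have h0 : ∀ x ≤ A, φ x = 0 := fun x hx => Real.smoothTransition.zero_of_nonpos
    (div_nonpos_of_nonpos_of_nonneg (sub_nonpos.2 hx) (sub_pos.2 hAB).le)
  have h1 : ∀ x ≥ B, φ x = 1 := fun x hx => Real.smoothTransition.one_of_one_le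
    ((one_le_div (sub_pos.2 hAB)).2 (sub_le_sub_right hx A))
  obtain ⟨r, hr, hφr⟩ := exists_continuousOn_eq_add_mul_one_sub_mul hφ hA hB h0 h1
  exact ⟨φ, r, hr, hφr,
    fun x => ⟨Real.smoothTransition.nonneg _, Real.smoothTransition.le_one _⟩, h0, h1⟩

theorem tsum_indicator_le_mem_Icc_laplaceSum (hb : ∀ i, 0 ≤ b i) {φ : ℝ → ℝ}
    (hφ : ∀ x, φ x ∈ Set.Icc 0 1) {ε : ℝ} (hε : 0 ≤ ε) (h0 : ∀ x ≤ Real.exp (-(1 + ε)), φ x = 0)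
    (h1 : ∀ x ≥ Real.exp (-1), φ x = 1)
    (hs : ∀ δ > 0, Summable fun i => b i * φ (Real.exp (-(δ * l i)))) {u : ℝ} (hu : 0 < u) :
    ∑' i, {i | l i ≤ u}.indicator b i ∈
      Set.Icc (laplaceSum b l φ ((1 + ε) * u⁻¹)) (laplaceSum b l φ (1 * u⁻¹)) := by
  have hlower (i : ι) : b i * φ (Real.exp (-((1 + ε) * u⁻¹ * l i))) ≤
      {i | l i ≤ u}.indicator b i := by
    by_cases h : l i ≤ u
    · rw [Set.indicator_of_mem (by exact h)]
      exact mul_le_of_le_one_right (hb i) (hφ _).2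
    · rw [Set.indicator_of_notMem (by exact h), h0, mul_zero]
      rw [Real.exp_le_exp, neg_le_neg_iff, mul_assoc, inv_mul_eq_div]
      exact le_mul_of_one_le_right (by positivity) ((one_le_div hu).2 (not_le.1 h).le)
  have hupper (i : ι) : {i | l i ≤ u}.indicator b i ≤ b i * φ (Real.exp (-(1 * u⁻¹ * l i))) := by
    by_cases h : l i ≤ u
    · rw [Set.indicator_of_mem (by exact h), h1, mul_one]
      rw [ge_iff_le, Real.exp_le_exp, neg_le_neg_iff, one_mul, inv_mul_eq_div]
      exact (div_le_one hu).2 h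
    · rw [Set.indicator_of_notMem (by exact h)]
      exact mul_nonneg (hb i) (hφ _).1
  have hsum : Summable ({i | l i ≤ u}.indicator b) :=
    .of_nonneg_of_le (Set.indicator_nonneg fun i _ => hb i) hupper (hs _ (by positivity))
  exact ⟨(hs _ (by positivity)).tsum_le_tsum hlower hsum,
    hsum.tsum_le_tsum hupper (hs _ (by positivity))⟩

/-- **Karamata's Tauberian theorem** in the case of a logarithmic singularity. -/
theorem exists_tendsto_tsum_indicator_sub_log (hb : ∀ i, 0 ≤ b i) (hl : ∀ i, 0 ≤ l i)
    (hs : ∀ δ > 0, Summable fun i => b i * Real.exp (-(δ * l i))) {C : ℝ}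
    (hF : Tendsto (fun δ => laplaceSum b l id δ + Real.log δ) (𝓝[>] 0) (𝓝 C)) :
    ∃ c, Tendsto (fun u => ∑' i, {i | l i ≤ u}.indicator b i - Real.log u) atTop (𝓝 c) := by
  refine exists_tendsto_of_forall_eventually_dist_le fun ε hε => ?_
  have hε2 : 0 < ε / 2 := half_pos hε
  obtain ⟨φ, r, hr, hφr, hφ, h0, h1⟩ := exists_cutoff (A := Real.exp (-(1 + ε / 2)))
    (B := Real.exp (-1)) (Real.exp_pos _) (Real.exp_lt_exp.2 (by linarith))
    (Real.exp_lt_one_iff.2 (by norm_num))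
  have hsr (δ : ℝ) (hδ : 0 < δ) := summable_mul_one_sub_mul_comp_exp hb hl hδ.le (hs δ hδ) hr
  have hsφ (δ : ℝ) (hδ : 0 < δ) : Summable fun i => b i * φ (Real.exp (-(δ * l i))) := by
    simpa only [hφr, mul_add] using (hs δ hδ).add (hsr δ hδ)
  obtain ⟨c, hc⟩ := exists_tendsto_laplaceSum_continuousOn hb hl hs hF hr
  have hG : Tendsto (fun δ => laplaceSum b l φ δ + Real.log δ) (𝓝[>] 0) (𝓝 (C + c)) := by
    refine (hF.add hc).congr' ?_
    filter_upwards [self_mem_nhdsWithin] with δ (hδ : 0 < δ)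
    simp only [laplaceSum, id, hφr, mul_add, (hs δ hδ).tsum_add (hsr δ hδ)]
    ring
  have hnear {k : ℝ} (hk : 0 < k) := ((tendsto_const_mul_nhdsGT_zero hk).comp
    tendsto_inv_atTop_nhdsGT_zero).eventually
      (hG.eventually (Metric.closedBall_mem_nhds (C + c) hε2))
  refine ⟨C + c, ?_⟩
  have hk : 0 < 1 + ε / 2 := by positivity
  filter_upwards [eventually_gt_atTop 0, hnear one_pos, hnear hk] with u hu hup hlow
  obtain ⟨hle, hge⟩ := tsum_indicator_le_mem_Icc_laplaceSum hb hφ hε2.le h0 h1 hsφ hu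
  simp only [Function.comp_apply, Real.dist_eq] at hup hlow ⊢
  rw [Real.log_mul one_ne_zero (by positivity), Real.log_inv, Real.log_one] at hup
  rw [Real.log_mul hk.ne' (by positivity), Real.log_inv] at hlow
  have hlog : Real.log (1 + ε / 2) ≤ ε / 2 := by linarith [Real.log_le_sub_one_of_pos hk]
  rw [abs_le] at hup hlow ⊢
  constructor <;> linarith

end Tauberian

section EulerProduct

variable {M F : Type*} [CommMonoidWithZero M] [UniqueFactorizationMonoid M] [Subsingleton Mˣ]
  [NormedField F]

theorem prime_dvd_mul_iff_of_ne {p q : M} (hp : Prime p) (hq : Prime q) (hpq : p ≠ q) {m : M} :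
    p ∣ q * m ↔ p ∣ m := by
  rw [hp.dvd_mul, hp.dvd_prime_iff_associated hq, associated_iff_eq, or_iff_right hpq]

theorem tsum_indicator_dvd (f : M →*₀ F) (S : Finset {p : M // Prime p}) {q : M} (hq : Prime q)
    (hqS : ⟨q, hq⟩ ∉ S) :
    ∑' m, {m | (∀ p ∈ S, ¬ (p : M) ∣ m) ∧ q ∣ m}.indicator f m =
      f q * ∑' m, {m | ∀ p ∈ S, ¬ (p : M) ∣ m}.indicator f m := by
  classical
  have hinj : Function.Injective (q * ·) := mul_right_injective₀ hq.ne_zero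
  rw [← hinj.tsum_eq, ← tsum_mul_left]
  · refine tsum_congr fun m => ?_
    have hmem : (∀ p ∈ S, ¬ (p : M) ∣ q * m) ↔ ∀ p ∈ S, ¬ (p : M) ∣ m :=
      forall₂_congr fun p hp => not_congr <|
        prime_dvd_mul_iff_of_ne p.2 hq fun h => hqS (by rwa [← show p = ⟨q, hq⟩ from Subtype.ext h])
    simp only [Set.indicator_apply, Set.mem_ofPred_eq, hmem, dvd_mul_right, and_true, map_mul,
      mul_ite, mul_zero]
  · intro m hm
    obtain ⟨k, rfl⟩ := (Set.mem_of_indicator_ne_zero hm).2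
    exact ⟨k, rfl⟩

variable [CompleteSpace F]

theorem tsum_indicator_forall_not_dvd {f : M →*₀ F} (hf : Summable f)
    (S : Finset {p : M // Prime p}) :
    ∑' m, {m | ∀ p ∈ S, ¬ (p : M) ∣ m}.indicator f m = (∏ p ∈ S, (1 - f p)) * ∑' m, f m := by
  classical
  induction S using Finset.induction_on with
  | empty => simp
  | insert q S hqS ih =>
    have hsplit : {m | ∀ p ∈ insert q S, ¬ (p : M) ∣ m} =
        {m | ∀ p ∈ S, ¬ (p : M) ∣ m} \ {m | (∀ p ∈ S, ¬ (p : M) ∣ m) ∧ (q : M) ∣ m} := by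
      ext m
      simp only [Finset.mem_insert, forall_eq_or_imp, Set.mem_ofPred_eq, Set.mem_sdiff]
      tauto
    rw [hsplit, Set.indicator_sdiff (fun m hm => hm.1), Pi.sub_def,
      (hf.indicator _).tsum_sub (hf.indicator _), tsum_indicator_dvd f S q.2 hqS, ih,
      Finset.prod_insert hqS]
    ring

theorem tendsto_tsum_indicator_forall_not_dvd {f : M →*₀ F} (hf : Summable (‖f ·‖)) :
    Tendsto (fun S : Finset {p : M // Prime p} =>
      ∑' m, {m | ∀ p ∈ S, ¬ (p : M) ∣ m}.indicator f m) atTop (𝓝 1) := by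
  classical
  have hone : ∑' m, (Pi.single 1 1 : M → F) m = 1 := tsum_pi_single 1 1
  rw [← hone]
  refine tendsto_tsum_of_dominated_convergence hf (fun m => tendsto_nhds_of_eventually_eq ?_)
    (.of_forall fun S m => norm_indicator_le_norm_self _ _)
  rcases eq_or_ne m 1 with rfl | hm1
  · refine .of_forall fun S => ?_
    rw [Set.indicator_of_mem, map_one, Pi.single_eq_same]
    exact fun p _ => p.2.not_dvd_one
  rw [Pi.single_eq_of_ne hm1]
  rcases eq_or_ne m 0 with rfl | hm0
  · exact .of_forall fun S => by simp
  obtain ⟨p, hp, hpm⟩ :=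
    WfDvdMonoid.exists_irreducible_factor (fun h => hm1 (isUnit_iff_eq_one.1 h)) hm0
  filter_upwards [eventually_ge_atTop {⟨p, UniqueFactorizationMonoid.irreducible_iff_prime.1 hp⟩}]
    with S hS
  refine Set.indicator_of_notMem (fun h => ?_) f
  exact h _ (Finset.singleton_subset_iff.1 hS) hpm

theorem hasProd_one_sub_primes {f : M →*₀ F} (hf : Summable (‖f ·‖)) :
    HasProd (fun p : {p : M // Prime p} => 1 - f p) (∑' m, f m)⁻¹ := by
  have hlim := tendsto_tsum_indicator_forall_not_dvd hf
  simp only [tsum_indicator_forall_not_dvd hf.of_norm] at hlim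
  have hne : ∑' m, f m ≠ 0 := fun h => by simp [h] at hlim
  have := hlim.mul_const (∑' m, f m)⁻¹
  simpa only [HasProd, SummationFilter.unconditional_filter, mul_assoc, mul_inv_cancel₀ hne,
    mul_one, one_mul] using this

end EulerProduct

section Fibers

variable {α β : Type*} {φ : α → β} [∀ b, Finite {a // φ a = b}] {g : β → ℝ}

theorem hasSum_comp_of_hasSum_natCard_fiber_mul (hg : ∀ b, 0 ≤ g b) {s : ℝ}
    (h : HasSum (fun b => (Nat.card {a // φ a = b} : ℝ) * g b) s) :
    HasSum (fun a => g (φ a)) s := by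
  rw [← (Equiv.sigmaFiberEquiv φ).hasSum_iff]
  have hfiber (b : β) : ∀ a : {a // φ a = b}, g (φ a) = g b := fun a => congrArg g a.2
  have hfiber_tsum (b : β) : ∑' a : {a // φ a = b}, g (φ a) = Nat.card {a // φ a = b} * g b := by
    rw [tsum_congr (hfiber b), tsum_const, nsmul_eq_mul]
  have hsum : Summable fun x : Σ b, {a // φ a = b} => g (φ x.2) :=
    (summable_sigma_of_nonneg fun x => hg _).2
      ⟨fun b => .of_finite, by simpa only [hfiber_tsum] using h.summable⟩
  have := hsum.tsum_sigma
  simp only [hfiber_tsum, h.tsum_eq] at this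
  exact this ▸ hsum.hasSum

end Fibers

section DedekindZeta

variable (K : Type*) [Field K] [NumberField K]

/-- The number of ideals of norm `n` of the ring of integers of `K`: the `n`-th coefficient of the
Dedekind zeta function. -/
noncomputable def idealCount (n : ℕ) : ℕ :=
  Nat.card {I : Ideal (𝓞 K) // Ideal.absNorm I = n}

instance finite_absNorm_eq (n : ℕ) : Finite {I : Ideal (𝓞 K) // Ideal.absNorm I = n} :=
  Ideal.finite_setOfPred_absNorm_eq n

theorem LSeries_term_natCast (a : ℕ → ℕ) {s : ℝ} (hs : s ≠ 0) (n : ℕ) :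
    LSeries.term (fun n => a n) s n = ((a n * (n : ℝ) ^ (-s) : ℝ) : ℂ) := by
  rcases eq_or_ne n 0 with rfl | hn
  · simp [hs]
  · rw [LSeries.term_of_ne_zero hn, Real.rpow_neg n.cast_nonneg, ← div_eq_mul_inv,
      Complex.ofReal_div, Complex.ofReal_cpow n.cast_nonneg]
    simp only [Complex.ofReal_natCast]

theorem summable_idealCount_mul_rpow {s : ℝ} (hs : 1 < s) :
    Summable fun n : ℕ => (idealCount K n : ℝ) * (n : ℝ) ^ (-s) := by
  -- A divergent L-series has the junk value `0`, so the pole at `1` forces convergence nearby.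
  have hne : ∀ᶠ t : ℝ in 𝓝[>] 1, (t - 1) * dedekindZeta K t ≠ 0 :=
    (tendsto_sub_one_mul_dedekindZeta_nhdsGT K).eventually_ne
      (Complex.ofReal_ne_zero.2 (dedekindZeta_residue_ne_zero K))
  obtain ⟨t, ht0, h1t, hts⟩ := (hne.and (Ioo_mem_nhdsGT hs)).exists
  have hsum : LSeriesSummable (fun n => idealCount K n) s := by
    refine LSeriesSummable.of_re_le_re (s := t) (by simpa using hts.le) ?_
    by_contra h
    exact right_ne_zero_of_mul ht0 (tsum_eq_zero_of_not_summable h)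
  rw [LSeriesSummable, funext (LSeries_term_natCast (idealCount K) (by linarith))] at hsum
  exact Complex.summable_ofReal.1 hsum

theorem hasSum_absNorm_rpow {s : ℝ} (hs : 1 < s) :
    HasSum (fun I : Ideal (𝓞 K) => (Ideal.absNorm I : ℝ) ^ (-s))
      (∑' n : ℕ, (idealCount K n : ℝ) * (n : ℝ) ^ (-s)) :=
  hasSum_comp_of_hasSum_natCard_fiber_mul (φ := Ideal.absNorm) (g := fun n : ℕ => (n : ℝ) ^ (-s))
    (fun n => by positivity) (summable_idealCount_mul_rpow K hs).hasSum

theorem tendsto_sub_one_mul_tsum_absNorm_rpow :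
    Tendsto (fun s : ℝ => (s - 1) * ∑' I : Ideal (𝓞 K), (Ideal.absNorm I : ℝ) ^ (-s)) (𝓝[>] 1)
      (𝓝 (dedekindZeta_residue K)) := by
  refine ((Complex.continuous_re.tendsto _).comp
    (tendsto_sub_one_mul_dedekindZeta_nhdsGT K)).congr' ?_
  filter_upwards [self_mem_nhdsWithin] with s (hs : 1 < s)
  have hzeta : dedekindZeta K s = ((∑' I : Ideal (𝓞 K), (Ideal.absNorm I : ℝ) ^ (-s) : ℝ) : ℂ) := by
    rw [(hasSum_absNorm_rpow K hs).tsum_eq, Complex.ofReal_tsum]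
    exact tsum_congr (LSeries_term_natCast (idealCount K) (by linarith))
  rw [Function.comp_apply, hzeta, ← Complex.ofReal_one, ← Complex.ofReal_sub, ← Complex.ofReal_mul,
    Complex.ofReal_re]

/-- The nonzero prime ideals of the ring of integers of `K`. -/
abbrev PrimeIdeal : Type _ := {P : Ideal (𝓞 K) // Prime P}

/-- The summand `I ↦ N(I) ^ (-s)` of the Dedekind zeta function at a real `s`, as a morphism. -/
noncomputable def absNormRpow {s : ℝ} (hs : s ≠ 0) : Ideal (𝓞 K) →*₀ ℝ where
  toFun I := (Ideal.absNorm I : ℝ) ^ (-s)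
  map_zero' := by simp [hs]
  map_one' := by simp
  map_mul' I J := by
    rw [map_mul, Nat.cast_mul, Real.mul_rpow (Nat.cast_nonneg _) (Nat.cast_nonneg _)]

variable {K}

theorem two_le_absNorm (P : PrimeIdeal K) : 2 ≤ Ideal.absNorm P.1 := by
  have h0 : Ideal.absNorm P.1 ≠ 0 := Ideal.absNorm_eq_zero_iff.not.2 P.2.ne_zero
  have h1 : Ideal.absNorm P.1 ≠ 1 := by
    simpa [Ideal.absNorm_eq_one_iff, Ideal.isUnit_iff] using P.2.not_isUnit
  omega

end DedekindZeta

section LogSingularity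

theorem abs_log_one_sub_add_le {x : ℝ} (h0 : 0 ≤ x) (h : x ≤ 1 / 2) :
    |Real.log (1 - x) + x| ≤ 2 * x ^ 2 := by
  have hlog := Real.abs_log_sub_add_sum_range_le (x := x) (by rw [abs_of_nonneg h0]; linarith) 1
  rw [abs_of_nonneg h0] at hlog
  calc |Real.log (1 - x) + x| ≤ x ^ 2 / (1 - x) := by simpa [add_comm] using hlog
    _ ≤ x ^ 2 / (1 / 2) := by gcongr; linarith
    _ = 2 * x ^ 2 := by ring

theorem hasSum_log_of_hasProd {ι : Type*} {g : ι → ℝ} {a : ℝ} (h : HasProd g a)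
    (hg : ∀ i, g i ≠ 0) (ha : a ≠ 0) : HasSum (fun i => Real.log (g i)) (Real.log a) :=
  ((Real.continuousAt_log ha).tendsto.comp h).congr fun _ => Real.log_prod fun i _ => hg i

variable {K : Type*} [Field K] [NumberField K]

theorem absNorm_rpow_neg_le {s t : ℝ} (hst : s ≤ t) (P : PrimeIdeal K) :
    (Ideal.absNorm P.1 : ℝ) ^ (-t) ≤ (Ideal.absNorm P.1 : ℝ) ^ (-s) :=
  Real.rpow_le_rpow_of_exponent_le
    (by exact_mod_cast one_le_two.trans (two_le_absNorm P)) (neg_le_neg hst)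

theorem absNorm_rpow_neg_le_half {s : ℝ} (hs : 1 ≤ s) (P : PrimeIdeal K) :
    (Ideal.absNorm P.1 : ℝ) ^ (-s) ≤ 1 / 2 :=
  calc (Ideal.absNorm P.1 : ℝ) ^ (-s) ≤ (Ideal.absNorm P.1 : ℝ) ^ (-1 : ℝ) :=
        absNorm_rpow_neg_le hs P
    _ = (Ideal.absNorm P.1 : ℝ)⁻¹ := Real.rpow_neg_one _
    _ ≤ (2 : ℝ)⁻¹ := inv_anti₀ two_pos (by exact_mod_cast two_le_absNorm P)
    _ = 1 / 2 := by norm_num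

theorem summable_primeIdeal_absNorm_rpow {s : ℝ} (hs : 1 < s) :
    Summable fun P : PrimeIdeal K => (Ideal.absNorm P.1 : ℝ) ^ (-s) :=
  (hasSum_absNorm_rpow K hs).summable.comp_injective Subtype.val_injective

variable (K) in
theorem tsum_absNorm_rpow_pos {s : ℝ} (hs : 1 < s) :
    0 < ∑' I : Ideal (𝓞 K), (Ideal.absNorm I : ℝ) ^ (-s) :=
  (hasSum_absNorm_rpow K hs).summable.tsum_pos (fun I => by positivity) 1 (by simp)

variable (K) in
theorem hasSum_log_one_sub_absNorm_rpow {s : ℝ} (hs : 1 < s) :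
    HasSum (fun P : PrimeIdeal K => Real.log (1 - (Ideal.absNorm P.1 : ℝ) ^ (-s)))
      (-Real.log (∑' I : Ideal (𝓞 K), (Ideal.absNorm I : ℝ) ^ (-s))) := by
  rw [← Real.log_inv]
  refine hasSum_log_of_hasProd (hasProd_one_sub_primes (f := absNormRpow K (by positivity))
    (hasSum_absNorm_rpow K hs).summable.norm) (fun P => ?_) (inv_ne_zero
    (tsum_absNorm_rpow_pos K hs).ne')
  linarith [absNorm_rpow_neg_le_half hs.le P]

theorem abs_log_one_sub_absNorm_rpow_add_le {s : ℝ} (hs : 1 ≤ s) (P : PrimeIdeal K) :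
    |Real.log (1 - (Ideal.absNorm P.1 : ℝ) ^ (-s)) + (Ideal.absNorm P.1 : ℝ) ^ (-s)| ≤
      2 * (Ideal.absNorm P.1 : ℝ) ^ (-2 : ℝ) :=
  calc _ ≤ 2 * ((Ideal.absNorm P.1 : ℝ) ^ (-s)) ^ 2 :=
        abs_log_one_sub_add_le (by positivity) (absNorm_rpow_neg_le_half hs P)
    _ ≤ 2 * ((Ideal.absNorm P.1 : ℝ) ^ (-1 : ℝ)) ^ 2 :=
        mul_le_mul_of_nonneg_left (pow_le_pow_left₀ (by positivity) (absNorm_rpow_neg_le hs P) 2)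
          zero_le_two
    _ = 2 * (Ideal.absNorm P.1 : ℝ) ^ (-2 : ℝ) := by
        rw [← Real.rpow_natCast, ← Real.rpow_mul (Nat.cast_nonneg _)]
        norm_num

variable (K) in
theorem exists_tendsto_tsum_log_one_sub_absNorm_rpow_add :
    ∃ C, Tendsto (fun s : ℝ => ∑' P : PrimeIdeal K,
      (Real.log (1 - (Ideal.absNorm P.1 : ℝ) ^ (-s)) + (Ideal.absNorm P.1 : ℝ) ^ (-s)))
      (𝓝[>] 1) (𝓝 C) := by
  refine ⟨_, tendsto_tsum_of_dominated_convergence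
    (g := fun P => Real.log (1 - (Ideal.absNorm P.1 : ℝ) ^ (-1 : ℝ)) +
      (Ideal.absNorm P.1 : ℝ) ^ (-1 : ℝ))
    ((summable_primeIdeal_absNorm_rpow one_lt_two).mul_left 2) (fun P => ?_)
    (eventually_nhdsWithin_of_forall fun s hs P => abs_log_one_sub_absNorm_rpow_add_le
      (le_of_lt hs) P)⟩
  have hN : (Ideal.absNorm P.1 : ℝ) ≠ 0 := by
    exact_mod_cast (two_pos.trans_le (two_le_absNorm P)).ne'
  have hlt : 1 - (Ideal.absNorm P.1 : ℝ) ^ (-1 : ℝ) ≠ 0 := by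
    linarith [absNorm_rpow_neg_le_half le_rfl P]
  have hcont : ContinuousAt (fun s : ℝ => (Ideal.absNorm P.1 : ℝ) ^ (-s)) 1 :=
    continuousAt_const.rpow continuousAt_neg (.inl hN)
  exact (((continuousAt_const.sub hcont).log hlt).add hcont).tendsto.mono_left nhdsWithin_le_nhds

variable (K) in
theorem exists_tendsto_tsum_primeIdeal_absNorm_rpow_add_log :
    ∃ C, Tendsto (fun s : ℝ => ∑' P : PrimeIdeal K, (Ideal.absNorm P.1 : ℝ) ^ (-s) +
      Real.log (s - 1)) (𝓝[>] 1) (𝓝 C) := by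
  obtain ⟨C, hC⟩ := exists_tendsto_tsum_log_one_sub_absNorm_rpow_add K
  refine ⟨_, (hC.add ((tendsto_sub_one_mul_tsum_absNorm_rpow K).log
    (dedekindZeta_residue_ne_zero K))).congr' ?_⟩
  filter_upwards [self_mem_nhdsWithin] with s (hs : 1 < s)
  have hlog := hasSum_log_one_sub_absNorm_rpow K hs
  rw [hlog.summable.tsum_add (summable_primeIdeal_absNorm_rpow hs), hlog.tsum_eq,
    Real.log_mul (sub_pos.2 hs).ne' (tsum_absNorm_rpow_pos K hs).ne']
  ring

variable (K) in
/-- **Mertens' theorem** for the prime ideals of a number field. -/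
theorem exists_tendsto_tsum_primeIdeal_sub_log_log :
    ∃ c, Tendsto (fun x : ℝ => ∑' P : PrimeIdeal K,
      {P : PrimeIdeal K | (Ideal.absNorm P.1 : ℝ) ≤ x}.indicator
        (fun P => (Ideal.absNorm P.1 : ℝ)⁻¹) P - Real.log (Real.log x)) atTop (𝓝 c) := by
  have hN (P : PrimeIdeal K) : (2 : ℝ) ≤ Ideal.absNorm P.1 := by exact_mod_cast two_le_absNorm P
  have hterm (δ : ℝ) (P : PrimeIdeal K) : (Ideal.absNorm P.1 : ℝ)⁻¹ *
      Real.exp (-(δ * Real.log (Ideal.absNorm P.1))) = (Ideal.absNorm P.1 : ℝ) ^ (-(1 + δ)) := by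
    have := two_pos.trans_le (hN P)
    rw [neg_add, Real.rpow_add this, Real.rpow_neg_one, Real.rpow_def_of_pos this]
    ring_nf
  obtain ⟨C, hC⟩ := exists_tendsto_tsum_primeIdeal_absNorm_rpow_add_log K
  have hshift : Tendsto (fun δ : ℝ => 1 + δ) (𝓝[>] 0) (𝓝[>] 1) := by
    rw [Tendsto, map_add_left_nhdsGT, add_zero]
  obtain ⟨c, hc⟩ := exists_tendsto_tsum_indicator_sub_log
    (b := fun P : PrimeIdeal K => (Ideal.absNorm P.1 : ℝ)⁻¹)
    (l := fun P => Real.log (Ideal.absNorm P.1)) (fun P => by positivity)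
    (fun P => Real.log_nonneg (one_le_two.trans (hN P)))
    (fun δ hδ => by
      simpa only [hterm] using summable_primeIdeal_absNorm_rpow (lt_add_of_pos_right 1 hδ))
    (by simpa only [laplaceSum, id, hterm, Function.comp_def, add_sub_cancel_left]
      using hC.comp hshift)
  refine ⟨c, (hc.comp Real.tendsto_log_atTop).congr' ?_⟩
  filter_upwards [eventually_gt_atTop 0] with x hx
  have hset : {P : PrimeIdeal K | Real.log (Ideal.absNorm P.1) ≤ Real.log x} =
      {P : PrimeIdeal K | (Ideal.absNorm P.1 : ℝ) ≤ x} :=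
    Set.ext fun P => Real.log_le_log_iff (two_pos.trans_le (hN P)) hx
  simp only [Function.comp_apply, hset]

end LogSingularity

section DegreeOne

theorem ncard_primesOver_le_finrank {R : Type*} [CommRing R] [IsDomain R] (p : Ideal R) [p.IsPrime]
    (S : Type*) [CommRing S] [Algebra R S] [Module.Finite R S] [Module.Flat R S] :
    (p.primesOver S).ncard ≤ Module.finrank R S := by
  have := (Algebra.QuasiFinite.finite_primesOver (S := S) p).fintype
  rw [← Ideal.sum_ramification_inertia_eq_finrank p S, ← Nat.card_coe_set_eq,
    Nat.card_eq_fintype_card, ← Finset.card_univ, Finset.card_eq_sum_ones]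
  refine Finset.sum_le_sum fun P _ => ?_
  have := P.2.1
  have := P.2.2
  exact Nat.mul_pos (Ideal.ramificationIdx_pos ..) (Ideal.inertiaDeg_pos ..)

variable {K : Type*} [Field K] [NumberField K]

/-- The rational prime below a prime ideal. -/
noncomputable def primeBelow (P : PrimeIdeal K) : ℕ :=
  Ideal.absNorm (P.1.under ℤ)

theorem primeBelow_prime (P : PrimeIdeal K) : (primeBelow P).Prime := by
  have := Ideal.isPrime_of_prime P.2
  have : NeZero P.1 := ⟨P.2.ne_zero⟩
  exact Nat.absNorm_under_prime P.1

theorem primeBelow_pow_inertiaDeg (P : PrimeIdeal K) :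
    primeBelow P ^ P.1.inertiaDeg ℤ = Ideal.absNorm P.1 := by
  have := Ideal.isPrime_of_prime P.2
  exact Ideal.absNorm_pow_inertiaDeg (P.1.under ℤ) P.1

theorem mem_primesOver_primeBelow (P : PrimeIdeal K) :
    P.1 ∈ (Ideal.span {(primeBelow P : ℤ)}).primesOver (𝓞 K) := by
  rw [primeBelow, Int.ideal_span_absNorm_eq_self]
  exact ⟨Ideal.isPrime_of_prime P.2, P.1.over_under⟩

/-- The fibre of `primeBelow` over `n`, inside the set of primes over `n`. -/
noncomputable def primeBelowFiberEmbedding (K : Type*) [Field K] [NumberField K] (n : ℕ) :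
    {P : PrimeIdeal K // primeBelow P = n} ↪ (Ideal.span {(n : ℤ)}).primesOver (𝓞 K) where
  toFun P := ⟨P.1.1, by simpa only [P.2] using mem_primesOver_primeBelow P.1⟩
  inj' _ _ h := Subtype.ext (Subtype.ext (Subtype.mk.inj h))

instance finite_primeBelow_eq (n : ℕ) : Finite {P : PrimeIdeal K // primeBelow P = n} :=
  have := (Algebra.QuasiFinite.finite_primesOver (S := 𝓞 K) (Ideal.span {(n : ℤ)})).to_subtype
  .of_injective _ (primeBelowFiberEmbedding K n).injective

variable (K) in
theorem natCard_primeBelow_eq_le (n : ℕ) :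
    Nat.card {P : PrimeIdeal K // primeBelow P = n} ≤ Module.finrank ℚ K := by
  rcases isEmpty_or_nonempty {P : PrimeIdeal K // primeBelow P = n} with _ | ⟨P, rfl⟩
  · simp
  have := Ideal.isPrime_of_prime P.2
  have : (Ideal.span {(primeBelow P : ℤ)}).IsPrime :=
    (Ideal.span_singleton_prime (by exact_mod_cast (primeBelow_prime P).ne_zero)).2
      (Nat.prime_iff_prime_int.1 (primeBelow_prime P))
  have := (Algebra.QuasiFinite.finite_primesOver (S := 𝓞 K)
    (Ideal.span {(primeBelow P : ℤ)})).to_subtype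
  calc _ ≤ Nat.card ((Ideal.span {(primeBelow P : ℤ)}).primesOver (𝓞 K)) :=
        Nat.card_le_card_of_injective _ (primeBelowFiberEmbedding K _).injective
    _ ≤ Module.finrank ℤ (𝓞 K) := ncard_primesOver_le_finrank _ _
    _ = Module.finrank ℚ K := RingOfIntegers.rank K

variable (K) in
theorem summable_inv_primeBelow_sq :
    Summable fun P : PrimeIdeal K => ((primeBelow P : ℝ) ^ 2)⁻¹ := by
  refine (hasSum_comp_of_hasSum_natCard_fiber_mul (φ := primeBelow (K := K))
    (g := fun n : ℕ => ((n : ℝ) ^ 2)⁻¹) (fun n => by positivity)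
    (Summable.hasSum (.of_nonneg_of_le (fun n => by positivity) (fun n => ?_)
      ((Real.summable_nat_pow_inv.2 one_lt_two).mul_left (Module.finrank ℚ K : ℝ))))).summable
  gcongr
  exact natCard_primeBelow_eq_le K n

variable (K) in
/-- The prime ideals of residue degree one, recognised by their norm being a prime number. -/
def degreeOne : Set (PrimeIdeal K) :=
  {P | (Ideal.absNorm P.1).Prime}

variable (K) in
theorem summable_indicator_degreeOne_compl :
    Summable ((degreeOne K)ᶜ.indicator fun P => (Ideal.absNorm P.1 : ℝ)⁻¹) := by
  refine .of_nonneg_of_le (fun P => Set.indicator_nonneg (fun _ _ => by positivity) P) (fun P => ?_)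
    (summable_inv_primeBelow_sq K)
  refine Set.indicator_apply_le' (fun hP => ?_) fun _ => by positivity
  have hpos := (primeBelow_prime P).pos
  have := Ideal.isPrime_of_prime P.2
  have hdeg_ne : P.1.inertiaDeg ℤ ≠ 1 := fun h => hP <| by
    simpa only [degreeOne, Set.mem_ofPred_eq, ← primeBelow_pow_inertiaDeg P, h, pow_one]
      using primeBelow_prime P
  have hdeg : 2 ≤ P.1.inertiaDeg ℤ := by
    have := P.1.inertiaDeg_pos ℤ
    omega
  rw [← primeBelow_pow_inertiaDeg P, Nat.cast_pow]
  exact inv_anti₀ (by positivity) (pow_le_pow_right₀ (by exact_mod_cast hpos) hdeg)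

instance finite_primeIdeal_absNorm_eq (n : ℕ) :
    Finite {P : PrimeIdeal K // Ideal.absNorm P.1 = n} :=
  .of_injective (β := {I : Ideal (𝓞 K) // Ideal.absNorm I = n}) (fun P => ⟨P.1.1, P.2⟩)
    fun _ _ h => Subtype.ext (Subtype.ext (Subtype.mk.inj h))

variable (K) in
theorem natCard_primeIdeal_absNorm_eq {p : ℕ} (hp : p.Prime) :
    Nat.card {P : PrimeIdeal K // Ideal.absNorm P.1 = p} = idealCount K p := by
  refine Nat.card_congr (Equiv.subtypeSubtypeEquivSubtype (p := Prime)
    (q := fun I : Ideal (𝓞 K) => Ideal.absNorm I = p) fun {I} hI => ?_)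
  refine Ideal.prime_of_isPrime ?_ (Ideal.isPrime_of_irreducible_absNorm (hI ▸ hp))
  rintro rfl
  exact hp.ne_zero (by simpa using hI.symm)

variable (K) in
theorem hasSum_indicator_degreeOne (x : ℝ) :
    HasSum ({P : PrimeIdeal K | (Ideal.absNorm P.1 : ℝ) ≤ x}.indicator
        ((degreeOne K).indicator fun P => (Ideal.absNorm P.1 : ℝ)⁻¹))
      (∑ p ∈ Nat.primesBelow (⌊x⌋₊ + 1), (idealCount K p : ℝ) / p) := by
  classical
  have hmem (n : ℕ) : n ∈ Nat.primesBelow (⌊x⌋₊ + 1) ↔ (n : ℝ) ≤ x ∧ n.Prime := by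
    rw [Nat.mem_primesBelow, Nat.lt_succ_iff]
    exact and_congr_left fun hn => Nat.le_floor_iff' hn.ne_zero
  set g : ℕ → ℝ := (Nat.primesBelow (⌊x⌋₊ + 1) : Set ℕ).indicator fun n => (n : ℝ)⁻¹ with hg
  have hcomp : {P : PrimeIdeal K | (Ideal.absNorm P.1 : ℝ) ≤ x}.indicator
      ((degreeOne K).indicator fun P => (Ideal.absNorm P.1 : ℝ)⁻¹) =
        fun P => g (Ideal.absNorm P.1) := by
    ext P
    rw [Set.indicator_indicator]
    simp only [hg, Set.indicator_apply, Finset.mem_coe, hmem, degreeOne, Set.mem_inter_iff,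
      Set.mem_ofPred_eq]
  rw [hcomp]
  refine hasSum_comp_of_hasSum_natCard_fiber_mul
    (φ := fun P : PrimeIdeal K => Ideal.absNorm P.1) (g := g)
    (fun n => Set.indicator_nonneg (fun _ _ => by positivity) n) ?_
  convert hasSum_sum_of_ne_finset_zero (L := .unconditional ℕ)
    (s := Nat.primesBelow (⌊x⌋₊ + 1)) fun n hn => ?_ using 1
  · refine Finset.sum_congr rfl fun p hp => ?_
    rw [hg, Set.indicator_of_mem hp, natCard_primeIdeal_absNorm_eq K ((hmem p).1 hp).2,
      div_eq_mul_inv]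
  · rw [hg, Set.indicator_of_notMem hn, mul_zero]

theorem tendsto_tsum_indicator_le {ι : Type*} {g : ι → ℝ} (hg : Summable g) (l : ι → ℝ) :
    Tendsto (fun x : ℝ => ∑' i, {i | l i ≤ x}.indicator g i) atTop (𝓝 (∑' i, g i)) := by
  refine tendsto_tsum_of_dominated_convergence hg.norm (fun i => ?_)
    (.of_forall fun x i => norm_indicator_le_norm_self g i)
  refine tendsto_const_nhds.congr' ?_
  filter_upwards [eventually_ge_atTop (l i)] with x hx
  exact (Set.indicator_of_mem (s := {i | l i ≤ x}) hx g).symm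

variable (K) in
theorem exists_tendsto_sum_idealCount_div_sub_log_log :
    ∃ c, Tendsto (fun x : ℝ => ∑ p ∈ Nat.primesBelow (⌊x⌋₊ + 1), (idealCount K p : ℝ) / p -
      Real.log (Real.log x)) atTop (𝓝 c) := by
  obtain ⟨c, hc⟩ := exists_tendsto_tsum_primeIdeal_sub_log_log K
  have hrest := summable_indicator_degreeOne_compl K
  refine ⟨_, (hc.sub (tendsto_tsum_indicator_le hrest
    fun P => (Ideal.absNorm P.1 : ℝ))).congr fun x => ?_⟩
  have hsplit := (hasSum_indicator_degreeOne K x).add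
    (hrest.indicator {P | (Ideal.absNorm P.1 : ℝ) ≤ x}).hasSum
  rw [← Pi.add_def, ← Set.indicator_add', Set.indicator_self_add_compl] at hsplit
  rw [hsplit.tsum_eq]
  ring

end DegreeOne

section DedekindKummer

open UniqueFactorizationMonoid in
theorem natCard_linear_normalizedFactors {k : Type*} [Field k] [DecidableEq k] {g : k[X]}
    (hg : g ≠ 0) :
    Nat.card {Q : k[X] // Q ∈ normalizedFactors g ∧ Q.natDegree = 1} =
      Nat.card {t : k // g.eval t = 0} := by
  have hmem (t : k) : X - C t ∈ normalizedFactors g ↔ g.eval t = 0 := by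
    rw [mem_normalizedFactors_iff' hg, ← IsRoot.def, ← dvd_iff_isRoot]
    exact ⟨fun h => h.2.2, fun h => ⟨irreducible_X_sub_C t, (monic_X_sub_C t).normalize_eq_self, h⟩⟩
  refine (Nat.card_congr (.ofBijective
    (fun t => ⟨X - C t.1, (hmem t.1).2 t.2, natDegree_X_sub_C t.1⟩) ⟨fun s t h => ?_, ?_⟩)).symm
  · exact Subtype.ext (C_injective (sub_right_injective (Subtype.mk.inj h)))
  · rintro ⟨Q, hQ, hQ1⟩
    obtain ⟨hirr, hnorm, -⟩ := (mem_normalizedFactors_iff' hg).1 hQ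
    have hmonic : Q.Monic := hnorm ▸ monic_normalize hirr.ne_zero
    have hX : X - C (-Q.coeff 0) = Q := by
      rw [C_neg, sub_neg_eq_add, ← hmonic.eq_X_add_C hQ1]
    exact ⟨⟨-Q.coeff 0, (hmem _).1 (by rwa [hX])⟩, Subtype.ext hX⟩

variable {K : Type*} [Field K] [NumberField K]

theorem mem_primesOver_of_absNorm_eq {p : ℕ} (hp : p.Prime) {I : Ideal (𝓞 K)}
    (hI : Ideal.absNorm I = p) : I ∈ (Ideal.span {(p : ℤ)}).primesOver (𝓞 K) := by
  have : Fact p.Prime := ⟨hp⟩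
  have hprime : I.IsPrime := Ideal.isPrime_of_irreducible_absNorm (hI ▸ hp)
  have hmax := Int.ideal_span_isMaximal_of_prime p
  refine ⟨hprime, ⟨hmax.eq_of_le (hprime.under ℤ).ne_top ?_⟩⟩
  rw [Ideal.span_singleton_le_iff_mem, Ideal.under, Ideal.mem_comap]
  simpa [hI] using Ideal.absNorm_mem I

theorem absNorm_eq_iff_inertiaDeg_eq_one {p : ℕ} (hp : p.Prime)
    (P : (Ideal.span {(p : ℤ)}).primesOver (𝓞 K)) :
    Ideal.absNorm P.1 = p ↔ P.1.inertiaDeg ℤ = 1 := by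
  have := P.2.1
  have := P.2.2
  rw [← Ideal.pow_inertiaDeg p P.1]
  exact Nat.pow_eq_self_iff hp.one_lt

theorem idealCount_eq_natCard_roots {θ : 𝓞 K} {p : ℕ} [Fact p.Prime]
    (hp : ¬ p ∣ RingOfIntegers.exponent θ) :
    idealCount K p =
      Nat.card {t : ZMod p // ((minpoly ℤ θ).map (Int.castRingHom (ZMod p))).eval t = 0} := by
  rw [← natCard_linear_normalizedFactors ((minpoly.monic θ.isIntegral).map _).ne_zero]
  calc idealCount K p
    _ = Nat.card {P : (Ideal.span {(p : ℤ)}).primesOver (𝓞 K) // Ideal.absNorm P.1 = p} :=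
        Nat.card_congr
          (Equiv.subtypeSubtypeEquivSubtype (mem_primesOver_of_absNorm_eq Fact.out)).symm
    _ = Nat.card {Q : RingOfIntegers.monicFactorsMod θ p // Q.1.natDegree = 1} :=
        Nat.card_congr ((Ideal.primesOverSpanEquivMonicFactorsMod hp).subtypeEquiv fun P => by
          rw [absNorm_eq_iff_inertiaDeg_eq_one Fact.out,
            ← Ideal.inertiaDeg_primesOverSpanEquivMonicFactorsMod_symm_apply' hp
              (Ideal.primesOverSpanEquivMonicFactorsMod hp P).2]
          simp)
    _ = _ := Nat.card_congr ((Equiv.subtypeSubtypeEquivSubtypeInter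
        (· ∈ RingOfIntegers.monicFactorsMod θ p) (natDegree · = 1)).trans
          (Equiv.subtypeEquivRight fun Q => by
            rw [RingOfIntegers.monicFactorsMod, Multiset.mem_toFinset]))

open IntermediateField in
theorem exponent_ne_zero {θ : 𝓞 K} (hθ : ℚ⟮(θ : K)⟯ = ⊤) : RingOfIntegers.exponent θ ≠ 0 := by
  have hθInt : IsIntegral ℤ (θ : K) := θ.isIntegral_coe
  set B := PowerBasis.ofAdjoinEqTop hθInt.tower_top
    ((adjoin_simple_eq_top_iff_of_isAlgebraic hθInt.tower_top.isAlgebraic).1 hθ)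
  have hgen : B.gen = (θ : K) := PowerBasis.ofAdjoinEqTop_gen _ _
  obtain ⟨d, hd⟩ := (IsIntegrallyClosed.isIntegral_iff (R := ℤ)).1
    (Algebra.discr_isIntegral ℚ (R := ℤ) (b := B.basis) fun i => by
      rw [B.basis_eq_pow, hgen]
      exact hθInt.pow _)
  have hd0 : d ≠ 0 := by
    rintro rfl
    exact Algebra.discr_not_zero_of_basis ℚ B.basis (by rw [← hd, map_zero])
  have hmap : Algebra.adjoin ℤ {(θ : K)} =
      (Algebra.adjoin ℤ {θ}).map (IsScalarTower.toAlgHom ℤ (𝓞 K) K) := by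
    rw [AlgHom.map_adjoin]
    simp
  have hmem : (d : 𝓞 K) ∈ conductor ℤ θ := by
    refine mem_conductor_iff.2 fun b => ?_
    have hdb := Algebra.discr_mul_isIntegral_mem_adjoin ℚ (R := ℤ) (B := B)
      (by rwa [hgen]) b.isIntegral_coe
    rw [hgen, ← hd, hmap] at hdb
    obtain ⟨y, hy, hyb⟩ := hdb
    have : y = d * b := RingOfIntegers.coe_injective (by simpa [Algebra.smul_def] using hyb)
    exact this ▸ hy
  rw [RingOfIntegers.exponent, Ne, Ideal.absNorm_eq_zero_iff]
  intro h
  have : d ∈ (conductor ℤ θ).under ℤ := by simpa [Ideal.mem_comap] using hmem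
  exact hd0 (by simpa [h] using this)

end DedekindKummer

section Roots

theorem nu1_eq_natCard_roots {f : ℤ[X]} {p : ℕ} [Fact p.Prime] (hp : ¬ (p : ℤ) ∣ f.coeff 0) :
    nu1 f p = Nat.card {t : ZMod p // (f.map (Int.castRingHom (ZMod p))).eval t = 0} := by
  have heval (a : ℕ) : (f.map (Int.castRingHom (ZMod p))).eval (a : ZMod p) = 0 ↔
      (p : ℤ) ∣ f.eval (a : ℤ) := by
    rw [← ZMod.intCast_zmod_eq_zero_iff_dvd, ← Int.cast_natCast (R := ZMod p) a,
      eval_intCast_map, eq_intCast]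
    rfl
  have hcoprime {t : ZMod p} (ht : (f.map (Int.castRingHom (ZMod p))).eval t = 0) :
      Nat.gcd t.val p = 1 := by
    refine Nat.Coprime.symm ((Nat.Prime.coprime_iff_not_dvd Fact.out).2 fun hdvd => hp ?_)
    have ht0 : t = 0 := by
      rw [← ZMod.natCast_zmod_val t]
      exact (ZMod.natCast_eq_zero_iff _ _).2 hdvd
    simpa [ht0, coeff_zero_eq_eval_zero] using (heval 0).1 (by simpa [ht0] using ht)
  rw [nu1, Nat.card_eq_fintype_card, Fintype.card_subtype]
  refine Finset.card_nbij' (fun a : ℕ => (a : ZMod p)) ZMod.val (fun a ha => ?_) (fun t ht => ?_)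
    (fun a ha => ZMod.val_cast_of_lt (Finset.mem_range.1 (Finset.mem_filter.1 ha).1))
    (fun t _ => ZMod.natCast_zmod_val t)
  · exact Finset.mem_filter.2 ⟨Finset.mem_univ _, (heval a).2 (Finset.mem_filter.1 ha).2.2⟩
  · have ht := (Finset.mem_filter.1 ht).2
    exact Finset.mem_filter.2 ⟨Finset.mem_range.2 t.val_lt, hcoprime ht,
      (heval _).1 (by rwa [ZMod.natCast_zmod_val])⟩

theorem nu1_le_natDegree {f : ℤ[X]} {p : ℕ} (hp : p.Prime) (hpf : ¬ (p : ℤ) ∣ f.coeff 0) :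
    nu1 f p ≤ f.natDegree := by
  have : Fact p.Prime := ⟨hp⟩
  have hne : f.map (Int.castRingHom (ZMod p)) ≠ 0 := fun h => hpf <| by
    rw [← ZMod.intCast_zmod_eq_zero_iff_dvd, ← eq_intCast (Int.castRingHom (ZMod p)), ← coeff_map,
      h, coeff_zero]
  calc nu1 f p
    _ = Nat.card {t : ZMod p // t ∈ (f.map (Int.castRingHom (ZMod p))).roots.toFinset} := by
        simp only [nu1_eq_natCard_roots hpf, Multiset.mem_toFinset, mem_roots hne, IsRoot.def]
    _ ≤ (f.map (Int.castRingHom (ZMod p))).roots.card := by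
        rw [Nat.card_eq_fintype_card, Fintype.card_coe]
        exact Multiset.toFinset_card_le _
    _ ≤ (f.map (Int.castRingHom (ZMod p))).natDegree := card_roots' _
    _ ≤ f.natDegree := natDegree_map_le

theorem eventually_nu1_le_natDegree {f : ℤ[X]} (hf : f.coeff 0 ≠ 0) :
    ∀ᶠ p : ℕ in atTop, p.Prime → nu1 f p ≤ f.natDegree := by
  filter_upwards [eventually_gt_atTop (f.coeff 0).natAbs] with p hpf hp
  exact nu1_le_natDegree hp fun h =>
    Nat.not_dvd_of_pos_of_lt (Int.natAbs_pos.2 hf) hpf (Int.natCast_dvd.1 h)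

theorem natCard_roots_integralNormalization {f : ℤ[X]} {p : ℕ} [Fact p.Prime]
    (hp : ¬ (p : ℤ) ∣ f.leadingCoeff) :
    Nat.card {t : ZMod p // (f.integralNormalization.map (Int.castRingHom (ZMod p))).eval t = 0} =
      Nat.card {t : ZMod p // (f.map (Int.castRingHom (ZMod p))).eval t = 0} := by
  have hc : (f.leadingCoeff : ZMod p) ≠ 0 := by
    rwa [Ne, ZMod.intCast_zmod_eq_zero_iff_dvd]
  refine (Nat.card_congr ((Equiv.mulLeft₀ _ hc).subtypeEquiv fun t => ?_)).symm
  have hscale := scaleRoots_eval₂_mul (p := f) (Int.castRingHom (ZMod p)) t f.leadingCoeff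
  rw [← leadingCoeff_smul_integralNormalization, eval₂_smul, eq_intCast] at hscale
  rw [eval_map, eval_map, Equiv.mulLeft₀_apply, ← mul_eq_zero_iff_left (pow_ne_zero _ hc),
    ← hscale, mul_eq_zero_iff_left hc]

end Roots

section IntegralGenerator

open IntermediateField

theorem adjoin_simple_smul {F E : Type*} [Field F] [Field E] [Algebra F E] {c : F} (hc : c ≠ 0)
    (x : E) : F⟮c • x⟯ = F⟮x⟯ := by
  refine le_antisymm (adjoin_simple_le_iff.2 (smul_mem _ (mem_adjoin_simple_self F x)))
    (adjoin_simple_le_iff.2 ?_)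
  simpa [hc] using smul_mem F⟮c • x⟯ (mem_adjoin_simple_self F (c • x)) (x := c⁻¹)

theorem natDegree_eq_finrank {F E : Type*} [Field F] [Field E] [Algebra F E] [FiniteDimensional F E]
    {g : F[X]} (hirr : Irreducible g) {x : E} (hx : aeval x g = 0) (hgen : F⟮x⟯ = ⊤) :
    g.natDegree = Module.finrank F E := by
  rw [← (Field.primitive_element_iff_minpoly_natDegree_eq F x).1 hgen,
    ← minpoly.eq_of_irreducible hirr hx, natDegree_mul_C (by simpa using hirr.ne_zero)]

theorem adjoin_simple_leadingCoeff_smul {K : Type*} [Field K] [CharZero K] {f : ℤ[X]} (hf : f ≠ 0)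
    (θ : K) : ℚ⟮f.leadingCoeff • θ⟯ = ℚ⟮θ⟯ := by
  rw [← Int.cast_smul_eq_zsmul ℚ, adjoin_simple_smul (by simpa using hf)]

theorem minpoly_leadingCoeff_smul {K : Type*} [Field K] [NumberField K] {f : ℤ[X]}
    (hirr : Irreducible (f.map (Int.castRingHom ℚ))) {θ : K} (hθ : aeval θ f = 0)
    (hgen : ℚ⟮θ⟯ = ⊤) :
    minpoly ℤ (f.leadingCoeff • θ) = f.integralNormalization := by
  have hf : f ≠ 0 := by
    rintro rfl
    simp at hirr
  have hint := isIntegral_leadingCoeff_smul f θ hθ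
  have hroot : aeval (f.leadingCoeff • θ) f.integralNormalization = 0 := by
    rw [Algebra.smul_def]
    exact integralNormalization_aeval_eq_zero hθ fun x hx => by simpa using hx
  refine (eq_of_monic_of_dvd_of_natDegree_le (minpoly.monic hint)
    (monic_integralNormalization hf) (minpoly.isIntegrallyClosed_dvd hint hroot) ?_).symm
  rw [natDegree_integralNormalization,
    ← natDegree_map_eq_of_injective (f := Int.castRingHom ℚ) Int.cast_injective f,
    natDegree_eq_finrank hirr (by rwa [← algebraMap_int_eq, aeval_map_algebraMap]) hgen,
    ← (Field.primitive_element_iff_minpoly_natDegree_eq ℚ _).1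
      ((adjoin_simple_leadingCoeff_smul hf θ).trans hgen),
    minpoly.isIntegrallyClosed_eq_field_fractions' ℚ hint,
    (minpoly.monic hint).natDegree_map]

theorem exists_numberField_root {f : ℚ[X]} (hirr : Irreducible f) :
    ∃ (K : Type) (_ : Field K) (_ : NumberField K) (θ : K), aeval θ f = 0 ∧ ℚ⟮θ⟯ = ⊤ := by
  have : Fact (Irreducible f) := ⟨hirr⟩
  have : FiniteDimensional ℚ (AdjoinRoot f) := (AdjoinRoot.powerBasis hirr.ne_zero).finite
  have : CharZero (AdjoinRoot f) := algebraRat.charZero _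
  exact ⟨AdjoinRoot f, inferInstance, ⟨⟩, AdjoinRoot.root f,
    (AdjoinRoot.aeval_eq f).trans AdjoinRoot.mk_self, adjoin_root_eq_top f⟩

end IntegralGenerator

section IdealCount

open IntermediateField

theorem exists_forall_nu1_eq_idealCount_of_root {K : Type*} [Field K] [NumberField K] {f : ℤ[X]}
    (hirr : Irreducible (f.map (Int.castRingHom ℚ))) (hconst : f.coeff 0 ≠ 0) {θ : K}
    (hθ : aeval θ f = 0) (hgen : ℚ⟮θ⟯ = ⊤) :
    ∃ N : ℕ, N ≠ 0 ∧ ∀ p : ℕ, p.Prime → ¬ p ∣ N → nu1 f p = idealCount K p := by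
  have hf : f ≠ 0 := by
    rintro rfl
    exact hconst rfl
  let α : 𝓞 K := ⟨f.leadingCoeff • θ, isIntegral_leadingCoeff_smul f θ hθ⟩
  have hmin : minpoly ℤ α = f.integralNormalization := by
    rw [← minpoly_leadingCoeff_smul hirr hθ hgen]
    exact (minpoly.algebraMap_eq RingOfIntegers.coe_injective α).symm
  have hexp := exponent_ne_zero (θ := α) ((adjoin_simple_leadingCoeff_smul hf θ).trans hgen)
  refine ⟨RingOfIntegers.exponent α * (f.leadingCoeff.natAbs * (f.coeff 0).natAbs),
    by simpa using ⟨hexp, hf, hconst⟩, fun p hp hpN => ?_⟩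
  have : Fact p.Prime := ⟨hp⟩
  simp only [hp.dvd_mul, ← Int.natCast_dvd, not_or] at hpN
  obtain ⟨hp_exp, hp_lead, hp_const⟩ := hpN
  rw [nu1_eq_natCard_roots hp_const, idealCount_eq_natCard_roots hp_exp, hmin,
    natCard_roots_integralNormalization hp_lead]

theorem exists_numberField_eventually_nu1_eq_idealCount {f : ℤ[X]} (hirr : Irreducible f)
    (hdeg : f.natDegree ≠ 0) (hconst : f.coeff 0 ≠ 0) :
    ∃ (K : Type) (_ : Field K) (_ : NumberField K),
      ∀ᶠ p : ℕ in atTop, p.Prime → nu1 f p = idealCount K p := by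
  have hirrQ := (IsPrimitive.Int.irreducible_iff_irreducible_map_cast
    (hirr.isPrimitive hdeg)).1 hirr
  obtain ⟨K, _, _, θ, hθ, hgen⟩ := exists_numberField_root hirrQ
  rw [← algebraMap_int_eq, aeval_map_algebraMap] at hθ
  obtain ⟨N, hN, hnu⟩ := exists_forall_nu1_eq_idealCount_of_root hirrQ hconst hθ hgen
  refine ⟨K, inferInstance, inferInstance, ?_⟩
  filter_upwards [eventually_gt_atTop N] with p hpN hp
  exact hnu p hp (Nat.not_dvd_of_pos_of_lt (Nat.pos_of_ne_zero hN) hpN)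

end IdealCount

section PrimeSums

theorem tendsto_primes_coe_atTop : Tendsto (fun p : Nat.Primes => (p : ℕ)) cofinite atTop :=
  Nat.cofinite_eq_atTop ▸ Nat.Primes.coe_nat_injective.tendsto_cofinite

theorem tendsto_sum_primesBelow {w : ℕ → ℝ} (hw : Summable fun p : Nat.Primes => w p) :
    Tendsto (fun x : ℝ => ∑ p ∈ Nat.primesBelow (⌊x⌋₊ + 1), w p) atTop
      (𝓝 (∑' p : Nat.Primes, w p)) := by
  have hsum : HasSum ({p : ℕ | p.Prime}.indicator w) (∑' p : Nat.Primes, w p) :=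
    hasSum_subtype_iff_indicator.1 hw.hasSum
  refine (hsum.tendsto_sum_nat.comp
    ((tendsto_add_atTop_nat 1).comp tendsto_nat_floor_atTop)).congr fun x => ?_
  simp [Nat.primesBelow, Finset.sum_filter, Set.indicator_apply]

theorem exists_tendsto_sum_primesBelow_sub {u v : ℕ → ℝ} {h : ℝ → ℝ}
    (huv : Summable fun p : Nat.Primes => v p - u p)
    (hu : ∃ c, Tendsto (fun x : ℝ => ∑ p ∈ Nat.primesBelow (⌊x⌋₊ + 1), u p - h x) atTop (𝓝 c)) :
    ∃ c, Tendsto (fun x : ℝ => ∑ p ∈ Nat.primesBelow (⌊x⌋₊ + 1), v p - h x) atTop (𝓝 c) := by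
  obtain ⟨c, hc⟩ := hu
  refine ⟨_, (hc.add (tendsto_sum_primesBelow (w := fun p => v p - u p) huv)).congr fun x => ?_⟩
  rw [Finset.sum_sub_distrib]
  ring

end PrimeSums

section MertensProduct

theorem abs_neg_log_one_sub_div_sub_le {ν B p : ℝ} (hν : 0 ≤ ν) (hνB : ν ≤ B) (hp : 2 ≤ p)
    (hpB : 4 * B ≤ p) :
    |-Real.log (1 - ν / (p - 1)) - ν / p| ≤ (8 * B ^ 2 + 2 * B) * (p ^ 2)⁻¹ := by
  have hB : 0 ≤ B := hν.trans hνB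
  have hp0 : 0 < p := by linarith
  have hp1 : 0 < p - 1 := by linarith
  set x := ν / (p - 1) with hx
  have hx0 : 0 ≤ x := by positivity
  have hxB : x ≤ 2 * B / p :=
    calc x ≤ B / (p / 2) := by rw [hx]; gcongr; linarith
      _ = 2 * B / p := by field_simp
  have hx_half : x ≤ 1 / 2 := hxB.trans (by rw [div_le_iff₀ hp0]; linarith)
  have hsub : x - ν / p = x / p := by
    rw [hx]
    field_simp
    ring
  calc |-Real.log (1 - x) - ν / p| = |-(Real.log (1 - x) + x) + x / p| := by
        rw [← hsub]
        ring_nf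
    _ ≤ |Real.log (1 - x) + x| + x / p := by
        exact (abs_add_le _ _).trans_eq
          (by rw [abs_neg, abs_of_nonneg (div_nonneg hx0 hp0.le)])
    _ ≤ 2 * x ^ 2 + x / p := by gcongr; exact abs_log_one_sub_add_le hx0 hx_half
    _ ≤ 2 * (2 * B / p) ^ 2 + 2 * B / p / p := by gcongr
    _ = (8 * B ^ 2 + 2 * B) * (p ^ 2)⁻¹ := by field_simp; ring

theorem summable_neg_log_one_sub_div_sub {ν : ℕ → ℝ} {B : ℝ} (h0 : ∀ p, 0 ≤ ν p)
    (hB : ∀ᶠ p : ℕ in atTop, p.Prime → ν p ≤ B) :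
    Summable fun p : Nat.Primes => -Real.log (1 - ν p / ((p : ℝ) - 1)) - ν p / (p : ℝ) := by
  have hsq : Summable fun p : Nat.Primes => ((p : ℝ) ^ 2)⁻¹ :=
    (Real.summable_nat_pow_inv.2 one_lt_two).comp_injective Nat.Primes.coe_nat_injective
  refine (hsq.mul_left (8 * B ^ 2 + 2 * B)).of_norm_bounded_eventually ?_
  filter_upwards [tendsto_primes_coe_atTop.eventually hB,
    (tendsto_natCast_atTop_atTop.comp tendsto_primes_coe_atTop).eventually_ge_atTop (4 * B)]
    with p hpB hp4
  have hp2 : (2 : ℝ) ≤ (p : ℕ) := Nat.ofNat_le_cast.2 p.2.two_le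
  exact abs_neg_log_one_sub_div_sub_le (h0 p) (hpB p.2) hp2 hp4

theorem exists_tendsto_log_mul_prod_one_sub {ν : ℕ → ℝ} {B : ℝ} (h0 : ∀ p, 0 ≤ ν p)
    (hB : ∀ᶠ p : ℕ in atTop, p.Prime → ν p ≤ B) (hlt : ∀ p : ℕ, p.Prime → ν p < p - 1)
    (hmertens : ∃ c, Tendsto (fun x : ℝ => ∑ p ∈ Nat.primesBelow (⌊x⌋₊ + 1), ν p / p -
      Real.log (Real.log x)) atTop (𝓝 c)) :
    ∃ c : ℝ, 0 < c ∧ Tendsto (fun x : ℝ => Real.log x *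
      ∏ p ∈ Nat.primesBelow (⌊x⌋₊ + 1), (1 - ν p / ((p : ℝ) - 1))) atTop (𝓝 c) := by
  obtain ⟨c, hc⟩ := exists_tendsto_sum_primesBelow_sub (u := fun p => ν p / p)
    (v := fun p => -Real.log (1 - ν p / ((p : ℝ) - 1))) (summable_neg_log_one_sub_div_sub h0 hB)
    hmertens
  refine ⟨Real.exp (-c), Real.exp_pos _, hc.neg.rexp.congr' ?_⟩
  filter_upwards [eventually_gt_atTop 1] with x hx
  have hfactor (p : ℕ) (hp : p ∈ Nat.primesBelow (⌊x⌋₊ + 1)) : 0 < 1 - ν p / ((p : ℝ) - 1) := by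
    have hνp := hlt p (Nat.mem_primesBelow.1 hp).2
    rw [sub_pos, div_lt_one ((h0 p).trans_lt hνp)]
    exact hνp
  rw [Finset.sum_neg_distrib, neg_sub, sub_neg_eq_add, Real.exp_add, Real.exp_log (Real.log_pos hx),
    Real.exp_sum, Finset.prod_congr rfl fun p hp => Real.exp_log (hfactor p hp)]

end MertensProduct

theorem exists_tendsto_sum_nu1_div_sub_log_log {f : ℤ[X]} (hirr : Irreducible f)
    (hdeg : f.natDegree ≠ 0) (hconst : f.coeff 0 ≠ 0) :
    ∃ c, Tendsto (fun x : ℝ => ∑ p ∈ Nat.primesBelow (⌊x⌋₊ + 1), (nu1 f p : ℝ) / p -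
      Real.log (Real.log x)) atTop (𝓝 c) := by
  obtain ⟨K, _, _, hnu⟩ := exists_numberField_eventually_nu1_eq_idealCount hirr hdeg hconst
  refine exists_tendsto_sum_primesBelow_sub ((summable_congr_cofinite ?_).2 summable_zero)
    (exists_tendsto_sum_idealCount_div_sub_log_log K)
  filter_upwards [tendsto_primes_coe_atTop.eventually hnu] with p hp
  rw [hp p.2, sub_self]

theorem nu1_product_asymptotic (f : Polynomial ℤ) (hirr : Irreducible f)
    (hdeg : 1 ≤ f.natDegree) (hconst : f.coeff 0 ≠ 0)
    (hloc : ∀ p : ℕ, p.Prime → nu1 f p < p - 1) :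
    ∃ c : ℝ, 0 < c ∧
      Tendsto (fun x : ℝ => Real.log x *
          ∏ p ∈ (Finset.range (⌊x⌋₊ + 1)).filter Nat.Prime,
            (1 - (nu1 f p : ℝ) / ((p : ℝ) - 1)))
        atTop (nhds c) := by
  refine exists_tendsto_log_mul_prod_one_sub (ν := fun p => nu1 f p) (B := f.natDegree)
    (fun p => Nat.cast_nonneg _) ?_ (fun p hp => ?_)
    (exists_tendsto_sum_nu1_div_sub_log_log hirr (Nat.one_le_iff_ne_zero.1 hdeg) hconst)
  · exact_mod_cast eventually_nu1_le_natDegree hconst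
  · rw [← Nat.cast_pred hp.pos]
    exact_mod_cast hloc p hp
end

section
/- Fix real numbers α, β with 0 < α < β < 1/k and β > 1/(r+1) for a positive integer r. For large x set N = max{f(p) : p prime, x < p ≤ 2x}, z = N^α, y = N^β, η = r + 1 − 1/β, P(z) = ∏_{p < z, p prime} p, and for a positive integer n set w(n) = 1 − (1/η)·∑_{p | n, z ≤ p < y} (1 − log p/log y). Let S = ∑_{p prime, x < p ≤ 2x, gcd(f(p), P(z)) = 1} w(f(p)). If there exists C > 0 such that S ≥ C·x/(log x)² for all sufficiently large x, then there exists C' > 0 such that #{p prime : x < p ≤ 2x, Ω(f(p)) ≤ r} ≥ C'·x/(log x)² for all sufficiently large x. -/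
open Polynomial

/-- N = max{f(p) : p prime, x < p ≤ 2x}. -/
noncomputable def Nmax (f : Polynomial ℤ) (x : ℝ) : ℕ :=
  ((Finset.Ioc ⌊x⌋₊ ⌊2 * x⌋₊).filter Nat.Prime).sup (fun p => (f.eval (p : ℤ)).toNat)

/-- P(z) = ∏_{p < z, p prime} p. -/
noncomputable def primorialBelow (z : ℝ) : ℕ :=
  ∏ p ∈ (Finset.range ⌈z⌉₊).filter Nat.Prime, p

/-- The weighted sum S = ∑_{x < p ≤ 2x, (f(p), P(z)) = 1} w(f(p)) with
    z = N^α, y = N^β, η = r + 1 − 1/β and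
    w(n) = 1 − (1/η)·∑_{p ∣ n, z ≤ p < y} (1 − log p/log y). -/
noncomputable def Swt (f : Polynomial ℤ) (α β : ℝ) (r : ℕ) (x : ℝ) : ℝ :=
  let N : ℝ := (Nmax f x : ℝ)
  let z : ℝ := N ^ α
  let y : ℝ := N ^ β
  let η : ℝ := (r : ℝ) + 1 - 1 / β
  ∑ p ∈ (Finset.Ioc ⌊x⌋₊ ⌊2 * x⌋₊).filter
      (fun p : ℕ => p.Prime ∧ Int.gcd (f.eval (p : ℤ)) (primorialBelow z) = 1),
    (1 - (1 / η) * ∑ q ∈ (f.eval (p : ℤ)).natAbs.primeFactors.filter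
        (fun q : ℕ => z ≤ (q : ℝ) ∧ (q : ℝ) < y),
      (1 - Real.log q / Real.log y))

/-!
Write `Ω(n) - log n / log y` as the sum of `v_q(n) (1 - log q / log y)` over the primes `q ∣ n`.
Primes `q ≥ y` contribute nothing positive, so if all prime factors of `n` are at least `z` and no
`q < y` divides `n` twice, this sum is at most the sum in the weight `w(n)`; hence `w(n) > 0` forces
`Ω(n) < η + log n / log y ≤ r + 1` when `n ≤ N`. As weights are at most `1`, the sum `S` is at most
the number of good primes plus the number of `m ∈ (x, 2x]` with `q² ∣ f(m)` for some prime
`q ∈ [z, y)`. For large `q` all roots of `f` modulo `q` are simple, so they lift uniquely modulo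
`q²`, and this exceptional count is `O(x / z + y + 1)`, which is `o(x / log² x)` because `N` lies
between constant multiples of `x` and `x ^ k`.
-/

section

open Filter Asymptotics Finset

/-! ### Simple roots modulo primes -/

theorem exists_mul_add_mul_eq_C_of_isCoprime_map {R K : Type*} [CommRing R] [Field K]
    {φ : R →+* K} (hφ : Function.Injective φ) {f g : R[X]}
    (hcop : IsCoprime (f.map φ) (g.map φ)) (hdeg : f.natDegree ≠ 0 ∨ g.natDegree ≠ 0) :
    ∃ d : R, d ≠ 0 ∧ ∃ u v : R[X], f * u + g * v = C d := by
  obtain ⟨u, v, -, -, huv⟩ := exists_mul_add_mul_eq_C_resultant f g le_rfl le_rfl hdeg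
  have hres := resultant_ne_zero _ _ hcop
  rw [natDegree_map_eq_of_injective hφ, natDegree_map_eq_of_injective hφ,
    resultant_map_map] at hres
  exact ⟨_, fun h => hres (by rw [h, map_zero]), u, v, huv⟩

theorem separable_map_castRingHom_rat {f : ℤ[X]} (hf : Irreducible f) (hdeg : f.natDegree ≠ 0) :
    (f.map (Int.castRingHom ℚ)).Separable :=
  ((IsPrimitive.Int.irreducible_iff_irreducible_map_cast (hf.isPrimitive hdeg)).mp hf).separable

/-- All roots of `f` modulo `q` are simple. Since the derivative is tested at integers, this also
excludes that `f` vanishes identically modulo `q`. -/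
def SimpleRootsMod (f : ℤ[X]) (q : ℕ) : Prop :=
  ∀ m : ℤ, (q : ℤ) ∣ f.eval m → ¬ (q : ℤ) ∣ (derivative f).eval m

theorem eventually_simpleRootsMod {f : ℤ[X]} (hdeg : f.natDegree ≠ 0)
    (hsep : (f.map (Int.castRingHom ℚ)).Separable) :
    ∀ᶠ q : ℕ in atTop, SimpleRootsMod f q := by
  rw [separable_def, derivative_map] at hsep
  obtain ⟨d, hd, u, v, huv⟩ :=
    exists_mul_add_mul_eq_C_of_isCoprime_map (RingHom.injective_int _) hsep (Or.inl hdeg)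
  filter_upwards [eventually_gt_atTop d.natAbs] with q hq m hf hf'
  have hqd : (q : ℤ) ∣ d := by
    rw [← eval_C (a := d) (x := m), ← huv, eval_add, eval_mul, eval_mul]
    exact dvd_add (hf.mul_right _) (hf'.mul_right _)
  exact hq.not_ge (Nat.le_of_dvd (Int.natAbs_pos.mpr hd) (Int.natCast_dvd.mp hqd))

theorem SimpleRootsMod.map_ne_zero {f : ℤ[X]} {q : ℕ} (hf : SimpleRootsMod f q) :
    f.map (Int.castRingHom (ZMod q)) ≠ 0 := by
  intro h
  have heval (g : ℤ[X]) (hg : g.map (Int.castRingHom (ZMod q)) = 0) : (q : ℤ) ∣ g.eval 0 := by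
    rw [← ZMod.intCast_zmod_eq_zero_iff_dvd, ← eq_intCast (Int.castRingHom (ZMod q)),
      ← Int.cast_zero, ← eval_intCast_map, hg, eval_zero]
  exact hf 0 (heval f h) (heval _ (by rw [← derivative_map, h, derivative_zero]))

theorem sq_dvd_sub_of_sq_dvd_eval_sub {R : Type*} [CommRing R] {f : R[X]} {q m n : R}
    (hder : IsCoprime q ((derivative f).eval m)) (hmn : q ∣ n - m)
    (hf : q ^ 2 ∣ f.eval n - f.eval m) : q ^ 2 ∣ n - m := by
  obtain ⟨c, hc⟩ := f.binomExpansion m (n - m)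
  rw [add_sub_cancel] at hc
  have hlin : (derivative f).eval m * (n - m) = f.eval n - f.eval m - c * (n - m) ^ 2 := by
    linear_combination -hc
  refine hder.pow_left.dvd_of_dvd_mul_left (hlin ▸ ?_)
  exact dvd_sub hf ((pow_dvd_pow_of_dvd hmn 2).mul_left c)

/-! ### Values divisible by squares of primes -/

theorem card_filter_Ioc_modEq_le (a b r v : ℕ) :
    #{m ∈ Ioc a b | m ≡ v [MOD r]} ≤ (b - a) / r + 1 := by
  rw [← card_range ((b - a) / r + 1)]
  refine card_le_card_of_injOn (fun m => (m - a) / r) (fun m hm => ?_) fun m hm n hn hmn => ?_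
  · obtain ⟨hm, -⟩ := mem_filter.mp hm
    exact mem_coe.mpr (mem_range_succ_iff.mpr
      (Nat.div_le_div_right (Nat.sub_le_sub_right (mem_Ioc.mp hm).2 a)))
  · obtain ⟨hm, hmv⟩ := mem_filter.mp hm
    obtain ⟨hn, hnv⟩ := mem_filter.mp hn
    have ham := (mem_Ioc.mp hm).1.le
    have han := (mem_Ioc.mp hn).1.le
    have hmod : m - a ≡ n - a [MOD r] := by
      refine Nat.ModEq.add_right_cancel' a ?_
      rw [Nat.sub_add_cancel ham, Nat.sub_add_cancel han]
      exact hmv.trans hnv.symm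
    have hsub : m - a = n - a := by
      rw [← Nat.div_add_mod (m - a) r, ← Nat.div_add_mod (n - a) r, hmod]
      exact congrArg (r * · + _) hmn
    omega

theorem card_filter_Ioc_sq_dvd_eval_cast_eq_le {f : ℤ[X]} {q : ℕ} (hq : q.Prime)
    (hf : SimpleRootsMod f q) (a b : ℕ) (ρ : ZMod q) :
    #((Ioc a b).filter fun m : ℕ => (q : ℤ) ^ 2 ∣ f.eval (m : ℤ) ∧ (m : ZMod q) = ρ) ≤
      (b - a) / q ^ 2 + 1 := by
  obtain h | ⟨m₀, hm₀⟩ := Finset.eq_empty_or_nonempty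
    ((Ioc a b).filter fun m : ℕ => (q : ℤ) ^ 2 ∣ f.eval (m : ℤ) ∧ (m : ZMod q) = ρ)
  · rw [h, card_empty]
    exact Nat.zero_le _
  refine (card_le_card fun m hm => ?_).trans (card_filter_Ioc_modEq_le a b (q ^ 2) m₀)
  simp only [mem_filter] at hm hm₀ ⊢
  obtain ⟨hm, hfm, rfl⟩ := hm
  obtain ⟨-, hfm₀, hcast⟩ := hm₀
  have hder : IsCoprime (q : ℤ) ((derivative f).eval (m : ℤ)) :=
    (Nat.prime_iff_prime_int.mp hq).coprime_iff_not_dvd.mpr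
      (hf m ((dvd_pow_self _ two_ne_zero).trans hfm))
  have hsub : (q : ℤ) ∣ m₀ - m :=
    Nat.modEq_iff_dvd.mp ((ZMod.natCast_eq_natCast_iff _ _ _).mp hcast.symm)
  refine ⟨hm, Nat.modEq_iff_dvd.mpr ?_⟩
  rw [Nat.cast_pow]
  exact sq_dvd_sub_of_sq_dvd_eval_sub hder hsub (dvd_sub hfm₀ hfm)

theorem card_filter_Ioc_sq_dvd_eval_le {f : ℤ[X]} {q : ℕ} (hq : q.Prime)
    (hf : SimpleRootsMod f q) (a b : ℕ) :
    #((Ioc a b).filter fun m : ℕ => (q : ℤ) ^ 2 ∣ f.eval (m : ℤ)) ≤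
      f.natDegree * ((b - a) / q ^ 2 + 1) := by
  have : Fact q.Prime := ⟨hq⟩
  let g := f.map (Int.castRingHom (ZMod q))
  have hroot : ∀ m ∈ (Ioc a b).filter fun m : ℕ => (q : ℤ) ^ 2 ∣ f.eval (m : ℤ),
      (m : ZMod q) ∈ g.roots.toFinset := by
    intro m hm
    rw [Multiset.mem_toFinset, mem_roots hf.map_ne_zero, IsRoot.def, ← Int.cast_natCast,
      eval_intCast_map, eq_intCast, ZMod.intCast_zmod_eq_zero_iff_dvd]
    exact (dvd_pow_self _ two_ne_zero).trans (mem_filter.mp hm).2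
  have hcard : #g.roots.toFinset ≤ f.natDegree :=
    (Multiset.toFinset_card_le _).trans ((card_roots' g).trans natDegree_map_le)
  calc #((Ioc a b).filter fun m : ℕ => (q : ℤ) ^ 2 ∣ f.eval (m : ℤ))
      ≤ ((b - a) / q ^ 2 + 1) * #g.roots.toFinset :=
        card_le_mul_card_image_of_maps_to hroot _ fun ρ _ => by
          rw [filter_filter]
          exact card_filter_Ioc_sq_dvd_eval_cast_eq_le hq hf a b ρ
    _ ≤ f.natDegree * ((b - a) / q ^ 2 + 1) := by
        rw [mul_comm]
        exact Nat.mul_le_mul_right _ hcard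

/-- The integers `m ∈ (a, b]` for which `f(m)` is divisible by the square of a prime in `[z, y)`,
i.e. the arguments at which a positive weight does not control the number of prime factors. The
condition `z ≤ q < y` is encoded as `q ∈ [⌈z⌉, ⌈y⌉)`, which makes the union finite. -/
noncomputable def squareExceptions (f : ℤ[X]) (z y : ℝ) (a b : ℕ) : Finset ℕ :=
  {q ∈ Ico ⌈z⌉₊ ⌈y⌉₊ | q.Prime}.biUnion fun q =>
    (Ioc a b).filter fun m : ℕ => (q : ℤ) ^ 2 ∣ f.eval (m : ℤ)

theorem mem_squareExceptions {f : ℤ[X]} {z y : ℝ} {a b m : ℕ} :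
    m ∈ squareExceptions f z y a b ↔ m ∈ Ioc a b ∧
      ∃ q : ℕ, q.Prime ∧ z ≤ q ∧ (q : ℝ) < y ∧ (q : ℤ) ^ 2 ∣ f.eval (m : ℤ) := by
  simp only [squareExceptions, mem_biUnion, mem_filter, mem_Ico, Nat.ceil_le, Nat.lt_ceil]
  tauto

theorem sum_Ico_ceil_inv_sq_le {z : ℝ} (hz : 0 < z) (n : ℕ) :
    ∑ q ∈ Ico ⌈z⌉₊ n, ((q : ℝ) ^ 2)⁻¹ ≤ 2 / z := by
  have hceil : ⌈z⌉₊ - 1 + 1 = ⌈z⌉₊ := Nat.sub_add_cancel (Nat.ceil_pos.mpr hz)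
  calc ∑ q ∈ Ico ⌈z⌉₊ n, ((q : ℝ) ^ 2)⁻¹
      = ∑ q ∈ Ioo (⌈z⌉₊ - 1) n, ((q : ℝ) ^ 2)⁻¹ := by
        rw [← Ico_add_one_left_eq_Ioo, hceil]
    _ ≤ 2 / ((⌈z⌉₊ - 1 : ℕ) + 1) := sum_Ioo_inv_sq_le _ _
    _ = 2 / ⌈z⌉₊ := by exact_mod_cast congrArg (fun k : ℕ => (2 : ℝ) / k) hceil
    _ ≤ 2 / z := by gcongr; exact Nat.le_ceil z

theorem card_squareExceptions_le {f : ℤ[X]} {z y : ℝ} (hz : 0 < z) (hy : 0 ≤ y)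
    (hf : ∀ q : ℕ, z ≤ q → SimpleRootsMod f q) (a b : ℕ) :
    (#(squareExceptions f z y a b) : ℝ) ≤
      f.natDegree * (((b - a : ℕ) : ℝ) * (2 / z) + (y + 1)) := by
  set I := Ico ⌈z⌉₊ ⌈y⌉₊
  have hI : (#I : ℝ) ≤ y + 1 := by
    have hcard : #I ≤ ⌈y⌉₊ := (Nat.card_Ico _ _).trans_le (Nat.sub_le _ _)
    exact (Nat.cast_le.mpr hcard).trans (Nat.ceil_lt_add_one hy).le
  have hq (q : ℕ) (hq : q ∈ {q ∈ I | q.Prime}) :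
      (#((Ioc a b).filter fun m : ℕ => (q : ℤ) ^ 2 ∣ f.eval (m : ℤ)) : ℝ) ≤
        f.natDegree * (((b - a : ℕ) : ℝ) / q ^ 2 + 1) := by
    obtain ⟨hqI, hqp⟩ := mem_filter.mp hq
    have hcard := card_filter_Ioc_sq_dvd_eval_le hqp (hf q (Nat.ceil_le.mp (mem_Ico.mp hqI).1)) a b
    have hdiv : (((b - a) / q ^ 2 : ℕ) : ℝ) ≤ ((b - a : ℕ) : ℝ) / q ^ 2 := by
      exact_mod_cast Nat.cast_div_le (α := ℝ) (m := b - a) (n := q ^ 2)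
    calc (#((Ioc a b).filter fun m : ℕ => (q : ℤ) ^ 2 ∣ f.eval (m : ℤ)) : ℝ)
        ≤ f.natDegree * (((b - a) / q ^ 2 : ℕ) + 1) := by exact_mod_cast hcard
      _ ≤ f.natDegree * (((b - a : ℕ) : ℝ) / q ^ 2 + 1) := by gcongr
  calc (#(squareExceptions f z y a b) : ℝ)
      ≤ ∑ q ∈ I with q.Prime,
          (#((Ioc a b).filter fun m : ℕ => (q : ℤ) ^ 2 ∣ f.eval (m : ℤ)) : ℝ) := by
        rw [← Nat.cast_sum, Nat.cast_le]
        exact card_biUnion_le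
    _ ≤ ∑ q ∈ I with q.Prime, f.natDegree * (((b - a : ℕ) : ℝ) / q ^ 2 + 1) := sum_le_sum hq
    _ ≤ ∑ q ∈ I, f.natDegree * (((b - a : ℕ) : ℝ) / q ^ 2 + 1) :=
        sum_le_sum_of_subset_of_nonneg (filter_subset _ _) fun q _ _ => by positivity
    _ = f.natDegree * (((b - a : ℕ) : ℝ) * ∑ q ∈ I, ((q : ℝ) ^ 2)⁻¹ + #I) := by
        simp only [← mul_sum, sum_add_distrib, div_eq_mul_inv, sum_const, nsmul_eq_mul, mul_one]
    _ ≤ f.natDegree * (((b - a : ℕ) : ℝ) * (2 / z) + (y + 1)) := by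
        gcongr
        exact sum_Ico_ceil_inv_sq_le hz _

/-! ### The sieve weight -/

/-- The weight `w(n)` of the sieve, with `z`, `y` and `η` as free parameters. -/
noncomputable def sieveWeight (z y η : ℝ) (n : ℕ) : ℝ :=
  1 - (1 / η) * ∑ q ∈ n.primeFactors.filter (fun q : ℕ => z ≤ (q : ℝ) ∧ (q : ℝ) < y),
    (1 - Real.log q / Real.log y)

theorem sieveWeight_le_one {η : ℝ} (hη : 0 ≤ η) (z y : ℝ) (n : ℕ) : sieveWeight z y η n ≤ 1 := by
  refine sub_le_self _ (mul_nonneg (one_div_nonneg.mpr hη) (sum_nonneg fun q hq => ?_))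
  obtain ⟨hq, -, hqy⟩ := mem_filter.mp hq
  have hq1 : (1 : ℝ) < q := by exact_mod_cast (Nat.prime_of_mem_primeFactors hq).one_lt
  rw [sub_nonneg, div_le_one (Real.log_pos (hq1.trans hqy))]
  exact Real.log_le_log (one_pos.trans hq1) hqy.le

theorem cardFactors_sub_log_div_eq_sum (n : ℕ) (L : ℝ) :
    (ArithmeticFunction.cardFactors n : ℝ) - Real.log n / L =
      ∑ q ∈ n.primeFactors, (n.factorization q : ℝ) * (1 - Real.log q / L) := by
  have hΩ : (ArithmeticFunction.cardFactors n : ℝ) =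
      ∑ q ∈ n.primeFactors, (n.factorization q : ℝ) := by
    rw [ArithmeticFunction.cardFactors_eq_sum_factorization, Finsupp.sum, Nat.cast_sum,
      Nat.support_factorization]
  rw [hΩ, Real.log_nat_eq_sum_factorization, Finsupp.sum, Nat.support_factorization, sum_div,
    ← sum_sub_distrib]
  exact sum_congr rfl fun q _ => by ring

theorem sum_factorization_mul_one_sub_log_le {n : ℕ} {z y : ℝ} (hy : 1 < y)
    (hz : ∀ q ∈ n.primeFactors, z ≤ q)
    (hsq : ∀ q ∈ n.primeFactors, (q : ℝ) < y → ¬ q ^ 2 ∣ n) :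
    ∑ q ∈ n.primeFactors, (n.factorization q : ℝ) * (1 - Real.log q / Real.log y) ≤
      ∑ q ∈ n.primeFactors.filter (fun q : ℕ => z ≤ (q : ℝ) ∧ (q : ℝ) < y),
        (1 - Real.log q / Real.log y) := by
  rw [sum_filter]
  refine sum_le_sum fun q hq => ?_
  obtain ⟨hqp, hqn, hn⟩ := Nat.mem_primeFactors.mp hq
  by_cases hqy : (q : ℝ) < y
  · have hle : ¬ 2 ≤ n.factorization q := fun h =>
      hsq q hq hqy ((hqp.pow_dvd_iff_le_factorization hn).mpr h)
    have hpos : 0 < n.factorization q := hqp.factorization_pos_of_dvd hn hqn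
    have hone : n.factorization q = 1 := by omega
    rw [if_pos ⟨hz q hq, hqy⟩, hone, Nat.cast_one, one_mul]
  · have hlog : 1 ≤ Real.log q / Real.log y :=
      (one_le_div (Real.log_pos hy)).mpr (Real.log_le_log (by linarith) (not_lt.mp hqy))
    rw [if_neg (fun h => hqy h.2)]
    exact mul_nonpos_of_nonneg_of_nonpos (Nat.cast_nonneg _) (by linarith)

theorem cardFactors_lt_of_sieveWeight_pos {n : ℕ} {z y η : ℝ} (hη : 0 < η) (hy : 1 < y)
    (hz : ∀ q ∈ n.primeFactors, z ≤ q)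
    (hsq : ∀ q ∈ n.primeFactors, (q : ℝ) < y → ¬ q ^ 2 ∣ n) (hw : 0 < sieveWeight z y η n) :
    (ArithmeticFunction.cardFactors n : ℝ) < η + Real.log n / Real.log y := by
  rw [sieveWeight, sub_pos, one_div_mul_eq_div, div_lt_one hη] at hw
  rw [← sub_lt_iff_lt_add, cardFactors_sub_log_div_eq_sum]
  exact (sum_factorization_mul_one_sub_log_le hy hz hsq).trans_lt hw

theorem cardFactors_le_of_sieveWeight_pos {n r : ℕ} {N β z : ℝ} (hn : n ≠ 0) (hN : 1 < N)
    (hnN : (n : ℝ) ≤ N) (hβ : 0 < β) (hη : 0 < (r : ℝ) + 1 - 1 / β)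
    (hz : ∀ q ∈ n.primeFactors, z ≤ q)
    (hsq : ∀ q ∈ n.primeFactors, (q : ℝ) < N ^ β → ¬ q ^ 2 ∣ n)
    (hw : 0 < sieveWeight z (N ^ β) ((r : ℝ) + 1 - 1 / β) n) :
    ArithmeticFunction.cardFactors n ≤ r := by
  have hlogN : 0 < Real.log N := Real.log_pos hN
  have hlogn : Real.log n ≤ Real.log N :=
    Real.log_le_log (by exact_mod_cast Nat.pos_of_ne_zero hn) hnN
  have hquot : Real.log n / Real.log (N ^ β) ≤ 1 / β := by
    rw [Real.log_rpow (by linarith), div_le_div_iff₀ (by positivity) hβ, one_mul, mul_comm]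
    gcongr
  have hlt := cardFactors_lt_of_sieveWeight_pos hη (Real.one_lt_rpow hN hβ) hz hsq hw
  have hlt' : (ArithmeticFunction.cardFactors n : ℝ) < r + 1 := by linarith
  exact Nat.lt_succ_iff.mp (by exact_mod_cast hlt')

/-! ### The weighted sum -/

theorem Swt_eq_sum_sieveWeight (f : ℤ[X]) (α β : ℝ) (r : ℕ) (x : ℝ) :
    Swt f α β r x = ∑ p ∈ (Ioc ⌊x⌋₊ ⌊2 * x⌋₊).filter fun p : ℕ =>
        p.Prime ∧ Int.gcd (f.eval (p : ℤ)) (primorialBelow ((Nmax f x : ℝ) ^ α)) = 1,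
      sieveWeight ((Nmax f x : ℝ) ^ α) ((Nmax f x : ℝ) ^ β) ((r : ℝ) + 1 - 1 / β)
        (f.eval (p : ℤ)).natAbs :=
  rfl

theorem toNat_eval_le_Nmax {f : ℤ[X]} {x : ℝ} {p : ℕ} (hp : p.Prime)
    (hpx : p ∈ Ioc ⌊x⌋₊ ⌊2 * x⌋₊) : (f.eval (p : ℤ)).toNat ≤ Nmax f x :=
  le_sup (f := fun p : ℕ => (f.eval (p : ℤ)).toNat) (mem_filter.mpr ⟨hpx, hp⟩)

theorem le_of_mem_primeFactors_of_gcd_primorialBelow_eq_one {a : ℤ} {z : ℝ}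
    (ha : Int.gcd a (primorialBelow z) = 1) {q : ℕ} (hq : q ∈ a.natAbs.primeFactors) :
    z ≤ q := by
  obtain ⟨hqp, hqa, -⟩ := Nat.mem_primeFactors.mp hq
  by_contra! hlt
  have hqP : q ∣ primorialBelow z :=
    dvd_prod_of_mem (fun q : ℕ => q)
      (mem_filter.mpr ⟨mem_range.mpr (Nat.lt_ceil.mpr hlt), hqp⟩)
  rw [Int.gcd_def, Int.natAbs_natCast] at ha
  exact hqp.not_dvd_one (ha ▸ Nat.dvd_gcd hqa hqP)

theorem sum_le_card_filter_pos {ι : Type*} (s : Finset ι) {w : ι → ℝ} (hw : ∀ i ∈ s, w i ≤ 1) :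
    ∑ i ∈ s, w i ≤ #{i ∈ s | 0 < w i} := by
  rw [card_filter, Nat.cast_sum]
  refine sum_le_sum fun i hi => ?_
  split_ifs with hpos
  · exact_mod_cast hw i hi
  · exact_mod_cast not_lt.mp hpos

theorem cardFactors_le_or_mem_squareExceptions {f : ℤ[X]} {α β : ℝ} {r : ℕ} {x : ℝ} {p : ℕ}
    (hN : 1 < Nmax f x) (hβ : 0 < β) (hη : 0 < (r : ℝ) + 1 - 1 / β) (hp : p.Prime)
    (hpx : p ∈ Ioc ⌊x⌋₊ ⌊2 * x⌋₊) (hpos : 0 < f.eval (p : ℤ))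
    (hgcd : Int.gcd (f.eval (p : ℤ)) (primorialBelow ((Nmax f x : ℝ) ^ α)) = 1)
    (hw : 0 < sieveWeight ((Nmax f x : ℝ) ^ α) ((Nmax f x : ℝ) ^ β) ((r : ℝ) + 1 - 1 / β)
      (f.eval (p : ℤ)).natAbs) :
    ArithmeticFunction.cardFactors (f.eval (p : ℤ)).natAbs ≤ r ∨
      p ∈ squareExceptions f ((Nmax f x : ℝ) ^ α) ((Nmax f x : ℝ) ^ β) ⌊x⌋₊ ⌊2 * x⌋₊ := by
  refine or_iff_not_imp_right.mpr fun hexc => ?_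
  have hz (q : ℕ) (hq : q ∈ (f.eval (p : ℤ)).natAbs.primeFactors) : (Nmax f x : ℝ) ^ α ≤ q :=
    le_of_mem_primeFactors_of_gcd_primorialBelow_eq_one hgcd hq
  have hle : (f.eval (p : ℤ)).natAbs ≤ Nmax f x := by
    have := toNat_eval_le_Nmax (f := f) hp hpx
    omega
  refine cardFactors_le_of_sieveWeight_pos (by omega) (by exact_mod_cast hN)
    (by exact_mod_cast hle) hβ hη hz (fun q hq hqy hdvd => hexc ?_) hw
  refine mem_squareExceptions.mpr
    ⟨hpx, q, Nat.prime_of_mem_primeFactors hq, hz q hq, hqy, ?_⟩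
  rw [← Nat.cast_pow]
  exact Int.natCast_dvd.mpr hdvd

theorem Swt_le_card_add_card_squareExceptions {f : ℤ[X]} {β : ℝ} {r : ℕ} {x : ℝ} (α : ℝ)
    (hN : 1 < Nmax f x) (hβ : 0 < β) (hη : 0 < (r : ℝ) + 1 - 1 / β)
    (hpos : ∀ p ∈ Ioc ⌊x⌋₊ ⌊2 * x⌋₊, 0 < f.eval (p : ℤ)) :
    Swt f α β r x ≤
      #((Ioc ⌊x⌋₊ ⌊2 * x⌋₊).filter fun p : ℕ =>
        p.Prime ∧ ArithmeticFunction.cardFactors (f.eval (p : ℤ)).natAbs ≤ r) +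
      #(squareExceptions f ((Nmax f x : ℝ) ^ α) ((Nmax f x : ℝ) ^ β) ⌊x⌋₊ ⌊2 * x⌋₊) := by
  rw [Swt_eq_sum_sieveWeight]
  refine (sum_le_card_filter_pos _ fun p _ => sieveWeight_le_one hη.le _ _ _).trans ?_
  rw [← Nat.cast_add, Nat.cast_le]
  refine (card_le_card fun p hp => ?_).trans (card_union_le _ _)
  obtain ⟨hp, hw⟩ := mem_filter.mp hp
  obtain ⟨hpx, hpp, hgcd⟩ := mem_filter.mp hp
  exact mem_union.mpr
    ((cardFactors_le_or_mem_squareExceptions hN hβ hη hpp hpx (hpos p hpx) hgcd hw).imp_left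
      fun hΩ => mem_filter.mpr ⟨hpx, hpp, hΩ⟩)

/-! ### Growth of the largest value -/

theorem eval_map_castRingHom_natCast (f : ℤ[X]) (m : ℕ) :
    (f.map (Int.castRingHom ℝ)).eval (m : ℝ) = ((f.eval (m : ℤ) : ℤ) : ℝ) := by
  simpa only [Int.cast_natCast, eq_intCast] using
    eval_intCast_map (Int.castRingHom ℝ) f (m : ℤ)

theorem degree_map_castRingHom (f : ℤ[X]) : (f.map (Int.castRingHom ℝ)).degree = f.degree :=
  degree_map_eq_of_injective (RingHom.injective_int _) f

theorem eventually_eval_natCast_pos {f : ℤ[X]} (hdeg : 0 < f.degree) (hlead : 0 < f.leadingCoeff) :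
    ∀ᶠ m : ℕ in atTop, 0 < f.eval (m : ℤ) := by
  have hlead' : 0 ≤ (f.map (Int.castRingHom ℝ)).leadingCoeff := by
    rw [leadingCoeff_map_of_injective (RingHom.injective_int _), eq_intCast]
    exact_mod_cast hlead.le
  have htend := (f.map (Int.castRingHom ℝ)).tendsto_atTop_of_leadingCoeff_nonneg
    ((degree_map_castRingHom f).symm ▸ hdeg) hlead'
  filter_upwards [(htend.comp tendsto_natCast_atTop_atTop).eventually_gt_atTop 0] with m hm
  rw [Function.comp_apply, eval_map_castRingHom_natCast] at hm
  exact_mod_cast hm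

theorem natCast_isBigO_eval {f : ℤ[X]} (hdeg : 0 < f.degree) :
    (fun m : ℕ => (m : ℝ)) =O[atTop] fun m : ℕ => ((f.eval (m : ℤ) : ℤ) : ℝ) := by
  have hX : (X : ℝ[X]).degree ≤ (f.map (Int.castRingHom ℝ)).degree := by
    rw [degree_X, degree_map_castRingHom]
    exact (WithBot.one_le_iff_pos _).mpr hdeg
  simpa only [Function.comp_def, eval_X, eval_map_castRingHom_natCast] using
    (isBigO_atTop_of_degree_le _ _ hX).comp_tendsto tendsto_natCast_atTop_atTop

theorem eval_natCast_isBigO_pow (f : ℤ[X]) :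
    (fun m : ℕ => ((f.eval (m : ℤ) : ℤ) : ℝ)) =O[atTop] fun m : ℕ => (m : ℝ) ^ f.natDegree := by
  have hX : (f.map (Int.castRingHom ℝ)).degree ≤ ((X : ℝ[X]) ^ f.natDegree).degree := by
    rw [degree_X_pow, degree_map_castRingHom]
    exact degree_le_natDegree
  simpa only [Function.comp_def, eval_X, eval_pow, eval_map_castRingHom_natCast] using
    (isBigO_atTop_of_degree_le _ _ hX).comp_tendsto tendsto_natCast_atTop_atTop

theorem eventually_forall_mem_Ioc_floor {P : ℕ → Prop} (hP : ∀ᶠ m in atTop, P m) :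
    ∀ᶠ x : ℝ in atTop, ∀ m ∈ Ioc ⌊x⌋₊ ⌊2 * x⌋₊, P m := by
  filter_upwards [tendsto_nat_floor_atTop.eventually_forall_ge_atTop hP] with x hx m hm
  exact hx m (mem_Ioc.mp hm).1.le

theorem exists_prime_mem_Ioc_floor {x : ℝ} (hx : 1 ≤ x) :
    ∃ p : ℕ, p.Prime ∧ p ∈ Ioc ⌊x⌋₊ ⌊2 * x⌋₊ := by
  obtain ⟨p, hp, hlt, hle⟩ := Nat.exists_prime_lt_and_le_two_mul ⌊x⌋₊ (Nat.floor_pos.mpr hx).ne'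
  refine ⟨p, hp, mem_Ioc.mpr ⟨hlt, hle.trans (Nat.le_floor ?_)⟩⟩
  push_cast
  linarith [Nat.floor_le (zero_le_one.trans hx)]

theorem id_isBigO_Nmax {f : ℤ[X]} (hdeg : 0 < f.degree) (hlead : 0 < f.leadingCoeff) :
    (fun x : ℝ => x) =O[atTop] fun x => (Nmax f x : ℝ) := by
  obtain ⟨c, hc, hbound⟩ := (natCast_isBigO_eval hdeg).exists_pos
  refine IsBigO.of_bound c ?_
  filter_upwards [eventually_forall_mem_Ioc_floor hbound.bound,
    eventually_forall_mem_Ioc_floor (eventually_eval_natCast_pos hdeg hlead),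
    eventually_ge_atTop 1] with x hle hpos hx
  obtain ⟨p, hp, hpx⟩ := exists_prime_mem_Ioc_floor hx
  have heval : ((f.eval (p : ℤ) : ℤ) : ℝ) ≤ Nmax f x := by
    exact_mod_cast Int.toNat_le.mp (toNat_eval_le_Nmax (f := f) hp hpx)
  rw [Real.norm_of_nonneg (by linarith), Real.norm_natCast]
  calc x ≤ p := ((Nat.floor_lt (by linarith)).mp (mem_Ioc.mp hpx).1).le
    _ = ‖(p : ℝ)‖ := (Real.norm_natCast p).symm
    _ ≤ c * ‖((f.eval (p : ℤ) : ℤ) : ℝ)‖ := hle p hpx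
    _ = c * ((f.eval (p : ℤ) : ℤ) : ℝ) := by
        rw [Real.norm_of_nonneg (by exact_mod_cast (hpos p hpx).le)]
    _ ≤ c * Nmax f x := by gcongr

theorem Nmax_isBigO_pow (f : ℤ[X]) :
    (fun x => (Nmax f x : ℝ)) =O[atTop] fun x : ℝ => x ^ f.natDegree := by
  obtain ⟨c, hc, hbound⟩ := (eval_natCast_isBigO_pow f).exists_pos
  refine IsBigO.of_bound (c * 2 ^ f.natDegree) ?_
  filter_upwards [eventually_forall_mem_Ioc_floor hbound.bound, eventually_ge_atTop 0]
    with x hle hx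
  rw [Real.norm_natCast, Real.norm_of_nonneg (by positivity), mul_assoc, ← mul_pow]
  refine (Nat.le_floor_iff (by positivity)).mp (Finset.sup_le fun p hp => Nat.le_floor ?_)
  obtain ⟨hpx, -⟩ := mem_filter.mp hp
  have hp2x : (p : ℝ) ≤ 2 * x := (Nat.le_floor_iff (by positivity)).mp (mem_Ioc.mp hpx).2
  have htoNat : ((f.eval (p : ℤ)).toNat : ℝ) ≤ |((f.eval (p : ℤ) : ℤ) : ℝ)| := by
    rw [← Int.cast_abs, Int.abs_eq_natAbs, Int.cast_natCast, Nat.cast_le]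
    exact Int.toNat_le.mpr Int.le_natAbs
  calc ((f.eval (p : ℤ)).toNat : ℝ) ≤ ‖((f.eval (p : ℤ) : ℤ) : ℝ)‖ := htoNat
    _ ≤ c * ‖(p : ℝ) ^ f.natDegree‖ := hle p hpx
    _ = c * (p : ℝ) ^ f.natDegree := by rw [Real.norm_of_nonneg (by positivity)]
    _ ≤ c * (2 * x) ^ f.natDegree := by gcongr

theorem tendsto_Nmax_atTop {f : ℤ[X]} (hdeg : 0 < f.degree) (hlead : 0 < f.leadingCoeff) :
    Tendsto (fun x => (Nmax f x : ℝ)) atTop atTop := by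
  have hnorm := (id_isBigO_Nmax hdeg hlead).trans_tendsto_norm_atTop tendsto_norm_atTop_atTop
  simpa only [Real.norm_natCast] using hnorm

theorem div_Nmax_rpow_isBigO {f : ℤ[X]} (hdeg : 0 < f.degree) (hlead : 0 < f.leadingCoeff)
    {α : ℝ} (hα : 0 ≤ α) :
    (fun x => x / (Nmax f x : ℝ) ^ α) =O[atTop] fun x : ℝ => x ^ (1 - α) := by
  have hpow : (fun x : ℝ => x ^ α) =O[atTop] fun x => (Nmax f x : ℝ) ^ α :=
    (id_isBigO_Nmax hdeg hlead).rpow hα (Eventually.of_forall fun _ => Nat.cast_nonneg _)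
  have hinv := hpow.inv_rev <| (eventually_gt_atTop 0).mono fun x hx h =>
    absurd h (Real.rpow_pos_of_pos hx α).ne'
  refine ((isBigO_refl (fun x : ℝ => x) atTop).mul hinv).congr' EventuallyEq.rfl ?_
  filter_upwards [eventually_gt_atTop 0] with x hx
  rw [Real.rpow_sub hx, Real.rpow_one, div_eq_mul_inv]

theorem Nmax_rpow_isBigO (f : ℤ[X]) {β : ℝ} (hβ : 0 ≤ β) :
    (fun x => (Nmax f x : ℝ) ^ β) =O[atTop] fun x : ℝ => x ^ (f.natDegree * β) := by
  have hnonneg : ∀ᶠ x : ℝ in atTop, 0 ≤ x ^ f.natDegree :=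
    (eventually_ge_atTop 0).mono fun x hx => pow_nonneg hx _
  refine ((Nmax_isBigO_pow f).rpow hβ hnonneg).congr' EventuallyEq.rfl ?_
  filter_upwards [eventually_ge_atTop 0] with x hx
  rw [Real.rpow_mul hx, Real.rpow_natCast]

/-! ### The exceptional set is negligible -/

theorem isLittleO_rpow_div_log_sq {s : ℝ} (hs : s < 1) :
    (fun x : ℝ => x ^ s) =o[atTop] fun x : ℝ => x / Real.log x ^ 2 := by
  have hlog : (fun x : ℝ => Real.log x ^ (2 : ℝ)) =o[atTop] fun x : ℝ => x ^ (1 - s) :=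
    isLittleO_log_rpow_rpow_atTop 2 (sub_pos.mpr hs)
  refine ((isBigO_refl (fun x : ℝ => x ^ s / Real.log x ^ 2) atTop).mul_isLittleO hlog).congr'
    ?_ ?_
  · filter_upwards [eventually_gt_atTop 1] with x hx
    rw [Real.rpow_two, div_mul_cancel₀ _ (pow_ne_zero 2 (Real.log_pos hx).ne')]
  · filter_upwards [eventually_gt_atTop 0] with x hx
    rw [div_mul_eq_mul_div, ← Real.rpow_add hx, add_sub_cancel, Real.rpow_one]

theorem card_squareExceptions_Nmax_isBigO {f : ℤ[X]} (hdeg : 0 < f.degree)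
    (hlead : 0 < f.leadingCoeff) (hsep : (f.map (Int.castRingHom ℚ)).Separable) {α : ℝ}
    (hα : 0 < α) (β : ℝ) :
    (fun x : ℝ => (#(squareExceptions f ((Nmax f x : ℝ) ^ α) ((Nmax f x : ℝ) ^ β)
      ⌊x⌋₊ ⌊2 * x⌋₊) : ℝ)) =O[atTop]
        fun x => x / (Nmax f x : ℝ) ^ α + (Nmax f x : ℝ) ^ β + 1 := by
  have hz : Tendsto (fun x => ⌈(Nmax f x : ℝ) ^ α⌉₊) atTop atTop :=
    tendsto_nat_ceil_atTop.comp ((tendsto_rpow_atTop hα).comp (tendsto_Nmax_atTop hdeg hlead))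
  refine IsBigO.of_bound (f.natDegree * 4) ?_
  filter_upwards [(tendsto_Nmax_atTop hdeg hlead).eventually_gt_atTop 0, eventually_ge_atTop 0,
    hz.eventually_forall_ge_atTop
      (eventually_simpleRootsMod (natDegree_pos_iff_degree_pos.mpr hdeg).ne' hsep)]
    with x hN hx hsimple
  set z := (Nmax f x : ℝ) ^ α
  set y := (Nmax f x : ℝ) ^ β
  have hz0 : 0 < z := Real.rpow_pos_of_pos hN α
  have hy0 : 0 ≤ y := Real.rpow_nonneg hN.le β
  have hlen : ((⌊2 * x⌋₊ - ⌊x⌋₊ : ℕ) : ℝ) ≤ 2 * x :=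
    (Nat.cast_le.mpr (Nat.sub_le _ _)).trans (Nat.floor_le (by positivity))
  rw [Real.norm_natCast, Real.norm_of_nonneg (by positivity), mul_assoc]
  calc (#(squareExceptions f z y ⌊x⌋₊ ⌊2 * x⌋₊) : ℝ)
      ≤ f.natDegree * (((⌊2 * x⌋₊ - ⌊x⌋₊ : ℕ) : ℝ) * (2 / z) + (y + 1)) :=
        card_squareExceptions_le hz0 hy0 (fun q hq => hsimple q (Nat.ceil_le.mpr hq)) _ _
    _ ≤ f.natDegree * (2 * x * (2 / z) + 4 * (y + 1)) := by
        gcongr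
        linarith
    _ = f.natDegree * (4 * (x / z + y + 1)) := by ring

theorem card_squareExceptions_Nmax_isLittleO {f : ℤ[X]} (hdeg : 0 < f.degree)
    (hlead : 0 < f.leadingCoeff) (hsep : (f.map (Int.castRingHom ℚ)).Separable) {α β : ℝ}
    (hα : 0 < α) (hβ : 0 ≤ β) (hfβ : f.natDegree * β < 1) :
    (fun x : ℝ => (#(squareExceptions f ((Nmax f x : ℝ) ^ α) ((Nmax f x : ℝ) ^ β)
      ⌊x⌋₊ ⌊2 * x⌋₊) : ℝ)) =o[atTop] fun x => x / Real.log x ^ 2 := by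
  have hz := (div_Nmax_rpow_isBigO hdeg hlead hα.le).trans_isLittleO
    (isLittleO_rpow_div_log_sq (sub_lt_self 1 hα))
  have hy := (Nmax_rpow_isBigO f hβ).trans_isLittleO (isLittleO_rpow_div_log_sq hfβ)
  have hone : (fun _ : ℝ => (1 : ℝ)) =o[atTop] fun x => x / Real.log x ^ 2 := by
    simpa only [Real.rpow_zero] using isLittleO_rpow_div_log_sq one_pos
  exact (card_squareExceptions_Nmax_isBigO hdeg hlead hsep hα β).trans_isLittleO
    ((hz.add hy).add hone)

theorem weighted_sieve_lemma_general (f : ℤ[X]) (k : ℕ) (hdeg : f.natDegree = k) (hk : 1 ≤ k)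
    (hsep : (f.map (Int.castRingHom ℚ)).Separable) (hlead : 0 < f.leadingCoeff) (r : ℕ) (α β : ℝ)
    (hα : 0 < α) (hβ : β < 1 / k) (hβr : 1 / (r + 1 : ℝ) < β)
    (hS : ∃ C : ℝ, 0 < C ∧ ∃ x₀ : ℝ, ∀ x : ℝ, x₀ ≤ x →
      C * (x / (Real.log x) ^ 2) ≤ Swt f α β r x) :
    ∃ C' : ℝ, 0 < C' ∧ ∃ x₁ : ℝ, ∀ x : ℝ, x₁ ≤ x →
      C' * (x / (Real.log x) ^ 2) ≤
        (#((Ioc ⌊x⌋₊ ⌊2 * x⌋₊).filter fun p : ℕ =>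
          p.Prime ∧ ArithmeticFunction.cardFactors (f.eval (p : ℤ)).natAbs ≤ r) : ℝ) := by
  subst hdeg
  obtain ⟨C, hC, x₀, hS⟩ := hS
  have hβ0 : 0 < β := lt_trans (by positivity) hβr
  have hη : 0 < (r : ℝ) + 1 - 1 / β := sub_pos.mpr ((one_div_lt (by positivity) hβ0).mp hβr)
  have hfβ : (f.natDegree : ℝ) * β < 1 := (lt_div_iff₀' (by exact_mod_cast hk)).mp hβ
  have hpos : 0 < f.degree := natDegree_pos_iff_degree_pos.mp hk
  have hexc := card_squareExceptions_Nmax_isLittleO hpos hlead hsep hα hβ0.le hfβ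
  refine ⟨C / 2, half_pos hC, eventually_atTop.mp ?_⟩
  filter_upwards [hexc.bound (half_pos hC), (tendsto_Nmax_atTop hpos hlead).eventually_gt_atTop 1,
    eventually_forall_mem_Ioc_floor (eventually_eval_natCast_pos hpos hlead),
    eventually_ge_atTop x₀, eventually_ge_atTop 0] with x hexc hN hf hx₀ hx
  rw [Real.norm_natCast, Real.norm_of_nonneg (by positivity)] at hexc
  have hSwt := Swt_le_card_add_card_squareExceptions α (by exact_mod_cast hN) hβ0 hη hf
  linarith [hS x hx₀]

end

theorem weighted_sieve_lemma (f : Polynomial ℤ) (k : ℕ) (hdeg : f.natDegree = k)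
    (hk : 1 ≤ k) (hirr : Irreducible f) (hlead : 0 < f.leadingCoeff)
    (hconst : f.coeff 0 ≠ 0) (r : ℕ) (hr : 0 < r) (α β : ℝ)
    (hα : 0 < α) (hαβ : α < β) (hβ : β < 1 / k) (hβr : 1 / (r + 1 : ℝ) < β)
    (hS : ∃ C : ℝ, 0 < C ∧ ∃ x₀ : ℝ, ∀ x : ℝ, x₀ ≤ x →
      C * (x / (Real.log x) ^ 2) ≤ Swt f α β r x) :
    ∃ C' : ℝ, 0 < C' ∧ ∃ x₁ : ℝ, ∀ x : ℝ, x₁ ≤ x →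
      C' * (x / (Real.log x) ^ 2) ≤
        (((Finset.Ioc ⌊x⌋₊ ⌊2 * x⌋₊).filter
          (fun p : ℕ => p.Prime ∧
            ArithmeticFunction.cardFactors (f.eval (p : ℤ)).natAbs ≤ r)).card : ℝ) := by
  exact weighted_sieve_lemma_general f k hdeg hk
    (separable_map_castRingHom_rat hirr (by omega)) hlead r α β hα hβ hβr hS
end
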